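/- Let g : [0,1] → ℝ be measurable and bounded, and let u₀ ∈ W^{2,∞}([0,1]) with u₀(0) = u₀(1) and u₀'(0) = u₀'(1). Then there exist T > 0, depending only on u₀ and ‖g‖_∞, and a function u : [0,1] × [0,T] → ℝ with u(·,0) = u₀ such that: (i) u is Lipschitz continuous in t uniformly in x, and there is a constant M with ‖u(·,t)‖_{W^{2,∞}([0,1])} ≤ M for a.e. t ∈ [0,T]; (ii) u is a weak solution of u_t = u_xx/(1 + u_x²) + g(x) √(1 + u_x²), i.e. ∫₀^T ∫₀¹ ( u_t φ + arctan(u_x) φ_x − g(x) √(1 + u_x²) φ ) dx dt = 0 for every φ ∈ C¹([0,1] × (0,T)) compactly supported in time with φ(0,t) = φ(1,t) for all t. -/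

import Mathlib

open Real MeasureTheory

noncomputable section

/-- Admissible test functions: `C¹` on `[0,1] × (0,T)`, compactly supported in time
inside `(0,T)`, and `x`-periodic. -/
def IsTest (T : ℝ) (φ : ℝ → ℝ → ℝ) : Prop :=
  ContDiff ℝ 1 (fun p : ℝ × ℝ => φ p.1 p.2) ∧
  (∃ a b : ℝ, 0 < a ∧ b < T ∧ ∀ x t, t ∉ Set.Icc a b → φ x t = 0) ∧
  (∀ t, φ 0 t = φ 1 t)

/-- `u` is a weak solution on `[0,1] × [0,T]` of
`u_t = u_xx/(1+u_x²) + h(x)√(1+u_x²)` with periodic boundary conditions, in the class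
`W^{1,∞}([0,T], L^∞([0,1])) ∩ L^∞([0,T], W^{2,∞}([0,1]))`.  Here `ut`, `ux`, `uxx` are
the (a.e.) derivatives of `u`, `L` is the time-Lipschitz constant, and `M` a uniform
bound on the spatial `W^{2,∞}` norms. -/
def IsWeakSol (h : ℝ → ℝ) (T : ℝ) (u ut ux uxx : ℝ → ℝ → ℝ) (L M : ℝ) : Prop :=
  -- `u ∈ W^{1,∞}([0,T], L^∞([0,1]))`: Lipschitz in time, uniformly in space
  (∀ x ∈ Set.Icc (0:ℝ) 1, ∀ t ∈ Set.Icc (0:ℝ) T, ∀ s ∈ Set.Icc (0:ℝ) T,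
      |u x t - u x s| ≤ L * |t - s|) ∧
  -- `ut` is the a.e. time derivative of `u`, bounded by `L`
  (∀ x ∈ Set.Icc (0:ℝ) 1, ∀ᵐ t ∂(volume.restrict (Set.Icc (0:ℝ) T)),
      HasDerivAt (fun t' => u x t') (ut x t) t ∧ |ut x t| ≤ L) ∧
  -- `u ∈ L^∞([0,T], W^{2,∞}([0,1]))`, with boundary conditions
  (∀ᵐ t ∂(volume.restrict (Set.Icc (0:ℝ) T)),
      (∀ x ∈ Set.Icc (0:ℝ) 1,
        HasDerivAt (fun x' => u x' t) (ux x t) x ∧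
        |u x t| ≤ M ∧ |ux x t| ≤ M ∧ |uxx x t| ≤ M) ∧
      (∀ᵐ x ∂(volume.restrict (Set.Icc (0:ℝ) 1)),
        HasDerivAt (fun x' => ux x' t) (uxx x t) x) ∧
      (u 0 t - u 0 0 = u 1 t - u 1 0 ∧ ux 0 t = ux 1 t)) ∧
  -- weak formulation of the equation
  (∀ φ : ℝ → ℝ → ℝ, IsTest T φ →
    (∫ t in (0:ℝ)..T, ∫ x in (0:ℝ)..1,
      (ut x t * φ x t + Real.arctan (ux x t) * deriv (fun x' => φ x' t) x
        - h x * Real.sqrt (1 + (ux x t) ^ 2) * φ x t)) = 0)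

/-! Cut the slopes off at a level `R`, which makes the equation uniformly parabolic with bounded
forcing. Its explicit finite difference scheme is monotone, so consecutive time levels never drift
apart faster than the first two: the scheme is Lipschitz in time. Reading the scheme as a formula
for the spatial difference of the flux then bounds the second differences, because the flux is
strictly increasing; the forcing may thus be merely measurable. A limit of the scheme solves the
truncated equation for all times, is Lipschitz in time and `C^{1,1}` in space. Interpolating
between these two bounds, its slope has moved by at most `1` up to a time that depends only on the
bounds, so if `R` exceeds the initial slopes by `1`, the cut-off is not felt until then. -/

/-! ### Truncated nonlinearities -/

/-- The structural conditions on the flux `a` and the source profile `b` under which the explicit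
scheme for `v_t = (a(v_x))_x + g b(v_x)` is stable. The Lipschitz constants are normalised
to `1`. -/
structure UniformlyParabolic (a b : ℝ → ℝ) (c B : ℝ) : Prop where
  pos : 0 < c
  mul_sub_le : ∀ ⦃p q⦄, p ≤ q → c * (q - p) ≤ a q - a p
  lipschitz_flux : LipschitzWith 1 a
  lipschitz_source : LipschitzWith 1 b
  abs_source_le : ∀ p, |b p| ≤ B

theorem abs_sub_le_of_lipschitzWith_one {f : ℝ → ℝ} (hf : LipschitzWith 1 f) (p q : ℝ) :
    |f q - f p| ≤ |q - p| := by
  simpa [Real.dist_eq] using hf.dist_le_mul q p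

theorem abs_le_of_lipschitzWith_one {f : ℝ → ℝ} (hf : LipschitzWith 1 f) {p R : ℝ}
    (hp : |p| ≤ R) : |f p| ≤ |f 0| + R := by
  have := abs_sub_le_of_lipschitzWith_one hf 0 p
  rw [sub_zero] at this
  linarith [abs_sub_abs_le_abs_sub (f p) (f 0)]

theorem exists_secant_slope {f : ℝ → ℝ} (hf : LipschitzWith 1 f) (p q : ℝ) :
    ∃ β, |β| ≤ 1 ∧ f q - f p = β * (q - p) := by
  rcases eq_or_ne p q with rfl | hpq
  · exact ⟨0, by simp⟩
  · have hne : q - p ≠ 0 := sub_ne_zero.2 hpq.symm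
    refine ⟨(f q - f p) / (q - p), ?_, (div_mul_cancel₀ _ hne).symm⟩
    rw [abs_div]
    exact div_le_one_of_le₀ (abs_sub_le_of_lipschitzWith_one hf p q) (abs_nonneg _)

namespace UniformlyParabolic

variable {a b : ℝ → ℝ} {c B : ℝ}

theorem mul_abs_sub_le (hab : UniformlyParabolic a b c B) (p q : ℝ) :
    c * |q - p| ≤ |a q - a p| := by
  rcases le_total p q with hpq | hpq
  · rw [abs_of_nonneg (sub_nonneg.2 hpq)]
    exact (hab.mul_sub_le hpq).trans (le_abs_self _)
  · rw [abs_sub_comm q p, abs_sub_comm (a q), abs_of_nonneg (sub_nonneg.2 hpq)]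
    exact (hab.mul_sub_le hpq).trans (le_abs_self _)

theorem bound_nonneg (hab : UniformlyParabolic a b c B) : 0 ≤ B :=
  (abs_nonneg _).trans (hab.abs_source_le 0)

theorem exists_flux_slope (hab : UniformlyParabolic a b c B) (p q : ℝ) :
    ∃ α, c ≤ α ∧ α ≤ 1 ∧ a q - a p = α * (q - p) := by
  wlog hpq : p < q generalizing p q
  · rcases (not_lt.1 hpq).eq_or_lt with rfl | hqp
    · have hc := hab.mul_sub_le (zero_le_one (α := ℝ))
      have h1 := abs_sub_le_of_lipschitzWith_one hab.lipschitz_flux 0 1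
      rw [sub_zero, abs_one] at h1
      exact ⟨1, by linarith [le_abs_self (a 1 - a 0)], le_rfl, by simp⟩
    · obtain ⟨α, hc, h1, h⟩ := this q p hqp
      exact ⟨α, hc, h1, by linarith⟩
  obtain ⟨α, hα, h⟩ := exists_secant_slope hab.lipschitz_flux p q
  refine ⟨α, ?_, (abs_le.1 hα).2, h⟩
  have := hab.mul_sub_le hpq.le
  rw [h] at this
  exact le_of_mul_le_mul_right this (sub_pos.2 hpq)

end UniformlyParabolic

/-- Truncation of slopes to `[-R, R]`. -/
def clamp (R p : ℝ) : ℝ := max (-R) (min R p)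

theorem monotone_clamp (R : ℝ) : Monotone (clamp R) := fun _ _ h =>
  max_le_max le_rfl (min_le_min le_rfl h)

theorem lipschitzWith_clamp (R : ℝ) : LipschitzWith 1 (clamp R) :=
  (LipschitzWith.id.const_min R).const_max (-R)

theorem abs_clamp_le {R : ℝ} (hR : 0 ≤ R) (p : ℝ) : |clamp R p| ≤ R :=
  abs_le.2 ⟨le_max_left _ _, max_le (by linarith) (min_le_left _ _)⟩

theorem clamp_of_abs_le {R p : ℝ} (h : |p| ≤ R) : clamp R p = p := by
  rw [clamp, min_eq_right (abs_le.1 h).2, max_eq_right (abs_le.1 h).1]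

theorem lipschitzWith_arctan : LipschitzWith 1 arctan := by
  refine lipschitzWith_of_nnnorm_deriv_le Real.differentiable_arctan fun x => ?_
  rw [← NNReal.coe_le_coe, coe_nnnorm, Real.deriv_arctan, norm_of_nonneg (by positivity)]
  exact div_le_one_of_le₀ (by nlinarith [sq_nonneg x]) (by positivity)

theorem lipschitzWith_sqrt_one_add_sq : LipschitzWith 1 fun p : ℝ => √(1 + p ^ 2) := by
  have hnorm (p : ℝ) : √(1 + p ^ 2) = ‖(1 : ℂ) + p * Complex.I‖ := by
    simpa using (Complex.norm_add_mul_I 1 p).symm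
  refine LipschitzWith.of_le_add fun p q => ?_
  rw [hnorm, hnorm]
  calc ‖(1 : ℂ) + p * Complex.I‖ ≤ ‖(1 : ℂ) + q * Complex.I‖ + ‖((p - q : ℝ) : ℂ) * Complex.I‖ := by
        refine (norm_add_le _ _).trans_eq' ?_
        congr 1
        push_cast
        ring
    _ = ‖(1 : ℂ) + q * Complex.I‖ + dist p q := by
        rw [norm_mul, Complex.norm_I, mul_one, Complex.norm_real, Real.dist_eq, Real.norm_eq_abs]

theorem div_mul_sub_le_arctan_sub {R p q : ℝ} (hp : |p| ≤ R) (hq : |q| ≤ R) (hpq : p ≤ q) :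
    1 / (1 + R ^ 2) * (q - p) ≤ arctan q - arctan p := by
  refine (convex_Icc (-R) R).mul_sub_le_image_sub_of_le_deriv
    Real.continuous_arctan.continuousOn Real.differentiable_arctan.differentiableOn
    (fun x hx => ?_) p (abs_le.1 hp) q (abs_le.1 hq) hpq
  have hx' := interior_subset (s := Set.Icc (-R) R) hx
  rw [Real.deriv_arctan]
  exact one_div_le_one_div_of_le (by positivity) (by gcongr 1 + ?_; exact sq_le_sq' hx'.1 hx'.2)

/-- The flux `arctan`, continued beyond `[-R, R]` with the slope of `arctan` at `R`. -/
def truncatedFlux (R p : ℝ) : ℝ := arctan (clamp R p) + 1 / (1 + R ^ 2) * (p - clamp R p)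

/-- The forcing profile `√(1 + p²)`, frozen outside `[-R, R]`. -/
def truncatedSource (R p : ℝ) : ℝ := √(1 + clamp R p ^ 2)

theorem lipschitzWith_truncatedFlux (R : ℝ) : LipschitzWith 1 (truncatedFlux R) := by
  have hslope : 1 / (1 + R ^ 2) ≤ 1 :=
    div_le_one_of_le₀ (by nlinarith [sq_nonneg R]) (by positivity)
  have hslope0 : 0 ≤ 1 / (1 + R ^ 2) := by positivity
  refine LipschitzWith.of_le_add fun p q => ?_
  have harctan := abs_sub_le_of_lipschitzWith_one lipschitzWith_arctan (clamp R q) (clamp R p)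
  have hclamp := abs_sub_le_of_lipschitzWith_one (lipschitzWith_clamp R) q p
  simp only [truncatedFlux, Real.dist_eq]
  rcases le_total p q with hpq | hpq
  · have := monotone_clamp R hpq
    have := Real.arctan_strictMono.monotone this
    rw [abs_of_nonpos (by linarith)] at hclamp ⊢
    rw [abs_of_nonpos (by linarith)] at hclamp
    nlinarith
  · have := monotone_clamp R hpq
    rw [abs_of_nonneg (by linarith)] at hclamp ⊢
    rw [abs_of_nonneg (by linarith)] at hclamp
    have := (le_abs_self _).trans (harctan.trans_eq (abs_of_nonneg (by linarith)))
    nlinarith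

theorem uniformlyParabolic_truncated {R : ℝ} (hR : 0 ≤ R) :
    UniformlyParabolic (truncatedFlux R) (truncatedSource R) (1 / (1 + R ^ 2)) √(1 + R ^ 2) where
  pos := by positivity
  mul_sub_le p q hpq := by
    have := div_mul_sub_le_arctan_sub (abs_clamp_le hR p) (abs_clamp_le hR q)
      (monotone_clamp R hpq)
    simp only [truncatedFlux]
    linarith
  lipschitz_flux := lipschitzWith_truncatedFlux R
  lipschitz_source := by
    have := lipschitzWith_sqrt_one_add_sq.comp (lipschitzWith_clamp R)
    rwa [one_mul] at this
  abs_source_le p := by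
    rw [truncatedSource, abs_of_nonneg (Real.sqrt_nonneg _)]
    gcongr √(1 + ?_)
    exact sq_le_sq' (abs_le.1 (abs_clamp_le hR p)).1 (abs_le.1 (abs_clamp_le hR p)).2

/-! ### Grid functions -/

theorem abs_sub_le_of_step_nat {f : ℕ → ℝ} {c : ℝ} (hf : ∀ n, |f (n + 1) - f n| ≤ c)
    (m n : ℕ) : |f (m + n) - f m| ≤ c * n := by
  induction n with
  | zero => simp
  | succ n ih =>
    calc |f (m + (n + 1)) - f m| ≤ |f (m + n + 1) - f (m + n)| + |f (m + n) - f m| :=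
          abs_sub_le _ _ _
      _ ≤ c * (n + 1 : ℕ) := by push_cast; linarith [hf (m + n)]

theorem abs_sub_le_of_step_int {V : ℤ → ℝ} {c : ℝ} (hV : ∀ i, |V (i + 1) - V i| ≤ c)
    (i j : ℤ) : |V j - V i| ≤ c * |(j : ℝ) - i| := by
  wlog hij : i ≤ j generalizing i j
  · rw [abs_sub_comm, abs_sub_comm (j : ℝ)]
    exact this j i (le_of_not_ge hij)
  obtain ⟨n, rfl⟩ := Int.le.dest hij
  have hstep (n : ℕ) : |V (i + (n + 1 : ℕ)) - V (i + n)| ≤ c := by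
    simpa [add_assoc] using hV (i + n)
  simpa using abs_sub_le_of_step_nat (f := fun n : ℕ => V (i + n)) hstep 0 n

/-- The forward difference quotient of a grid function with mesh `h`. -/
def gridSlope (h : ℝ) (V : ℤ → ℝ) (i : ℤ) : ℝ := (V (i + 1) - V i) / h

section GridSlope

variable {h C : ℝ} {V : ℤ → ℝ}

theorem mul_gridSlope (hh : 0 < h) (V : ℤ → ℝ) (i : ℤ) :
    h * gridSlope h V i = V (i + 1) - V i :=
  mul_div_cancel₀ _ hh.ne'

theorem gridSlope_add_period {N : ℤ} (hV : ∀ i, V (i + N) = V i) (i : ℤ) :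
    gridSlope h V (i + N) = gridSlope h V i := by
  rw [gridSlope, gridSlope, add_right_comm, hV, hV]

theorem abs_sub_taylor_gridSlope_le (hh : 0 < h)
    (hV : ∀ i, |gridSlope h V (i + 1) - gridSlope h V i| ≤ C * h) (i j : ℤ) :
    |V j - V i - (j - i) * h * gridSlope h V i| ≤ C * (((j : ℝ) - i) * h) ^ 2 := by
  obtain ⟨m, rfl⟩ : ∃ m, j = i + m := ⟨j - i, by ring⟩
  have hC : 0 ≤ C * h := (abs_nonneg _).trans (hV 0)
  have hslope (m : ℤ) : h * |gridSlope h V (i + m) - gridSlope h V i| ≤ C * h ^ 2 * |(m : ℝ)| := by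
    have := abs_sub_le_of_step_int hV i (i + m)
    push_cast at this
    rw [add_sub_cancel_left] at this
    nlinarith
  have hstep (m : ℤ) : V (i + (m + 1)) - V i - (m + 1) * h * gridSlope h V i =
      V (i + m) - V i - m * h * gridSlope h V i
        + h * (gridSlope h V (i + m) - gridSlope h V i) := by
    linear_combination -mul_gridSlope hh V (i + m) + congrArg V (add_assoc i m 1).symm
  push_cast
  simp only [add_sub_cancel_left, mul_pow]
  induction m using Int.induction_on with
  | zero => simp
  | succ m ih =>
    have hs := hslope m
    have hm := hstep m
    push_cast at ih hm hs ⊢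
    rw [abs_of_nonneg (Nat.cast_nonneg (α := ℝ) m)] at hs
    rw [hm]
    refine (abs_add_le _ _).trans ?_
    rw [abs_mul, abs_of_pos hh]
    nlinarith [mul_nonneg (mul_nonneg hC hh.le) (Nat.cast_nonneg (α := ℝ) m), mul_nonneg hC hh.le]
  | pred m ih =>
    have hs := hslope (-m - 1)
    have hm := hstep (-m - 1)
    push_cast at ih hm hs ⊢
    rw [abs_of_nonpos (a := -(m : ℝ) - 1) (by linarith [Nat.cast_nonneg (α := ℝ) m])] at hs
    rw [sub_add_cancel, sub_add_cancel] at hm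
    rw [← sub_eq_of_eq_add hm]
    refine (abs_sub _ _).trans ?_
    rw [abs_mul, abs_of_pos hh]
    nlinarith [mul_nonneg (mul_nonneg hC hh.le) (Nat.cast_nonneg (α := ℝ) m), mul_nonneg hC hh.le]

theorem abs_gridSlope_le_of_periodic (hh : 0 < h)
    (hV : ∀ i, |gridSlope h V (i + 1) - gridSlope h V i| ≤ C * h) {N : ℤ} (hN : N * h = 1)
    (hper : ∀ i, V (i + N) = V i) (i : ℤ) : |gridSlope h V i| ≤ C := by
  have := abs_sub_taylor_gridSlope_le hh hV i (i + N)
  push_cast at this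
  simpa [hper, hN] using this

end GridSlope

theorem abs_floor_sub_floor_le (a b : ℝ) : |(⌊a⌋ : ℝ) - ⌊b⌋| ≤ |a - b| + 1 := by
  have := Int.floor_le a
  have := Int.lt_floor_add_one a
  have := Int.floor_le b
  have := Int.lt_floor_add_one b
  have := abs_le.1 (le_refl |a - b|)
  exact abs_le.2 ⟨by linarith, by linarith⟩

/-! ### The explicit monotone scheme -/

/-- One explicit Euler step, with mesh `h` and time step `τ`, for `v_t = (a(v_x))_x + g b(v_x)`;
`G` is the grid function replacing the forcing `g`. -/
def eulerStep (h τ : ℝ) (a b : ℝ → ℝ) (G U : ℤ → ℝ) (i : ℤ) : ℝ :=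
  U i + τ * ((a (gridSlope h U i) - a (gridSlope h U (i - 1))) / h + G i * b (gridSlope h U i))

/-- The grid solution after `k` explicit Euler steps. -/
def eulerScheme (h τ : ℝ) (a b : ℝ → ℝ) (G U : ℤ → ℝ) (k : ℕ) : ℤ → ℝ :=
  (eulerStep h τ a b G)^[k] U

/-- Stability of the explicit scheme: the parabolic CFL condition, and a mesh fine enough for the
forcing to be dominated by the diffusion. -/
structure Stable (h τ c M : ℝ) : Prop where
  mesh_pos : 0 < h
  step_pos : 0 < τ
  cfl : 4 * τ ≤ h ^ 2
  forcing : M * h ≤ c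

section Scheme

variable {h τ c M B : ℝ} {a b : ℝ → ℝ} {G U V : ℤ → ℝ}

theorem eulerStep_add_const (r : ℝ) (i : ℤ) :
    eulerStep h τ a b G (fun j => U j + r) i = eulerStep h τ a b G U i + r := by
  simp only [eulerStep, gridSlope, add_sub_add_right_eq_sub]
  ring

theorem eulerStep_add_period {N : ℤ} (hG : ∀ i, G (i + N) = G i) (hU : ∀ i, U (i + N) = U i)
    (i : ℤ) : eulerStep h τ a b G U (i + N) = eulerStep h τ a b G U i := by
  simp only [eulerStep, add_sub_right_comm i N 1, gridSlope_add_period hU, hG, hU]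

theorem eulerStep_sub (hh : h ≠ 0) {i : ℤ} {α α' β : ℝ}
    (hα : a (gridSlope h V i) - a (gridSlope h U i) = α * (gridSlope h V i - gridSlope h U i))
    (hα' : a (gridSlope h V (i - 1)) - a (gridSlope h U (i - 1)) =
      α' * (gridSlope h V (i - 1) - gridSlope h U (i - 1)))
    (hβ : b (gridSlope h V i) - b (gridSlope h U i) = β * (gridSlope h V i - gridSlope h U i)) :
    eulerStep h τ a b G V i - eulerStep h τ a b G U i =
      (1 - τ / h ^ 2 * (α + α' + G i * β * h)) * (V i - U i)
        + τ / h ^ 2 * (α + G i * β * h) * (V (i + 1) - U (i + 1))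
        + τ / h ^ 2 * α' * (V (i - 1) - U (i - 1)) := by
  have hstep : eulerStep h τ a b G V i - eulerStep h τ a b G U i =
      V i - U i + τ * ((α * (gridSlope h V i - gridSlope h U i)
        - α' * (gridSlope h V (i - 1) - gridSlope h U (i - 1))) / h
        + G i * (β * (gridSlope h V i - gridSlope h U i))) := by
    rw [← hα, ← hα', ← hβ, eulerStep, eulerStep]
    ring
  rw [hstep]
  simp only [gridSlope, sub_add_cancel]
  field_simp
  ring

/-- The step is an increasing function of `U (i - 1)`, `U i` and `U (i + 1)`: their secant
coefficients are `λα'`, `1 - λ(α + α' + γ)` and `λ(α + γ)`, with `λ = τ / h ^ 2`, `α, α' ∈ [c, 1]`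
and `|γ| ≤ M h ≤ c`. -/
theorem eulerStep_mono (hab : UniformlyParabolic a b c B) (hst : Stable h τ c M)
    (hG : ∀ i, |G i| ≤ M) (hUV : U ≤ V) : eulerStep h τ a b G U ≤ eulerStep h τ a b G V := by
  intro i
  have hh := hst.mesh_pos
  obtain ⟨α, hcα, hα1, hα⟩ := hab.exists_flux_slope (gridSlope h U i) (gridSlope h V i)
  obtain ⟨α', hcα', hα1', hα'⟩ :=
    hab.exists_flux_slope (gridSlope h U (i - 1)) (gridSlope h V (i - 1))
  obtain ⟨β, hβ1, hβ⟩ :=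
    exists_secant_slope hab.lipschitz_source (gridSlope h U i) (gridSlope h V i)
  set γ := G i * β * h with hγ_def
  have hγ : |γ| ≤ c := by
    rw [hγ_def, abs_mul, abs_mul, abs_of_pos hh]
    refine le_trans ?_ hst.forcing
    gcongr
    exact (mul_le_of_le_one_right (abs_nonneg _) hβ1).trans (hG i)
  set r := τ / h ^ 2 with hr_def
  have hr : 0 ≤ r := div_nonneg hst.step_pos.le (sq_nonneg h)
  have hr4 : 4 * r ≤ 1 := by
    rw [hr_def, ← mul_div_assoc]
    exact div_le_one_of_le₀ hst.cfl (sq_nonneg h)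
  have hγ' := abs_le.1 hγ
  have hi := sub_nonneg.2 (hUV i)
  have hsucc := sub_nonneg.2 (hUV (i + 1))
  have hpred := sub_nonneg.2 (hUV (i - 1))
  have hcenter : 0 ≤ 1 - r * (α + α' + γ) := by nlinarith [hab.pos]
  have hright : 0 ≤ r * (α + γ) := mul_nonneg hr (by linarith)
  have hleft : 0 ≤ r * α' := mul_nonneg hr (by linarith [hab.pos])
  rw [← sub_nonneg, eulerStep_sub hh.ne' hα hα' hβ]
  positivity

theorem abs_eulerStep_sub_le (hab : UniformlyParabolic a b c B) (hst : Stable h τ c M)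
    (hG : ∀ i, |G i| ≤ M) {r : ℝ} (hUV : ∀ i, |V i - U i| ≤ r) (i : ℤ) :
    |eulerStep h τ a b G V i - eulerStep h τ a b G U i| ≤ r := by
  have hle : V ≤ fun j => U j + r := fun j => by linarith [(abs_le.1 (hUV j)).2]
  have hge : U ≤ fun j => V j + r := fun j => by linarith [(abs_le.1 (hUV j)).1]
  have h1 := eulerStep_mono hab hst hG hle i
  have h2 := eulerStep_mono hab hst hG hge i
  rw [eulerStep_add_const] at h1 h2
  exact abs_le.2 ⟨by linarith, by linarith⟩

theorem eulerScheme_succ (k : ℕ) :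
    eulerScheme h τ a b G U (k + 1) = eulerStep h τ a b G (eulerScheme h τ a b G U k) :=
  Function.iterate_succ_apply' _ _ _

theorem eulerScheme_add_period {N : ℤ} (hG : ∀ i, G (i + N) = G i) (hU : ∀ i, U (i + N) = U i)
    (k : ℕ) (i : ℤ) : eulerScheme h τ a b G U k (i + N) = eulerScheme h τ a b G U k i := by
  induction k generalizing i with
  | zero => exact hU i
  | succ k ih => simp only [eulerScheme_succ, eulerStep_add_period hG ih]

theorem abs_eulerStep_sub_self_le (hab : UniformlyParabolic a b c B) (hst : Stable h τ c M)
    (hG : ∀ i, |G i| ≤ M) {K : ℝ}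
    (hU : ∀ i, |gridSlope h U (i + 1) - gridSlope h U i| ≤ K * h) (i : ℤ) :
    |eulerStep h τ a b G U i - U i| ≤ (K + M * B) * τ := by
  have hflux : |a (gridSlope h U i) - a (gridSlope h U (i - 1))| / h ≤ K := by
    rw [div_le_iff₀ hst.mesh_pos]
    refine (abs_sub_le_of_lipschitzWith_one hab.lipschitz_flux _ _).trans ?_
    simpa using hU (i - 1)
  have hsource : |G i * b (gridSlope h U i)| ≤ M * B := by
    rw [abs_mul]
    gcongr
    exacts [(abs_nonneg _).trans (hG i), hG i, hab.abs_source_le _]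
  rw [eulerStep, add_sub_cancel_left, abs_mul, abs_of_pos hst.step_pos, mul_comm]
  gcongr
  · exact hst.step_pos.le
  · refine (abs_add_le _ _).trans (add_le_add ?_ hsource)
    rwa [abs_div, abs_of_pos hst.mesh_pos]

theorem abs_eulerScheme_succ_sub_le (hab : UniformlyParabolic a b c B) (hst : Stable h τ c M)
    (hG : ∀ i, |G i| ≤ M) {K : ℝ}
    (hU : ∀ i, |gridSlope h U (i + 1) - gridSlope h U i| ≤ K * h) (k : ℕ) (i : ℤ) :
    |eulerScheme h τ a b G U (k + 1) i - eulerScheme h τ a b G U k i| ≤ (K + M * B) * τ := by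
  induction k generalizing i with
  | zero => exact abs_eulerStep_sub_self_le hab hst hG hU i
  | succ k ih =>
    simpa only [eulerScheme_succ] using abs_eulerStep_sub_le hab hst hG ih i

/-- The equation expresses the flux difference through the time increment and the source, and
`a` is expanding up to the factor `c`. -/
theorem abs_gridSlope_eulerScheme_succ_sub_le (hab : UniformlyParabolic a b c B)
    (hst : Stable h τ c M) (hG : ∀ i, |G i| ≤ M) {K : ℝ}
    (hU : ∀ i, |gridSlope h U (i + 1) - gridSlope h U i| ≤ K * h) (k : ℕ) (i : ℤ) :
    |gridSlope h (eulerScheme h τ a b G U k) (i + 1) - gridSlope h (eulerScheme h τ a b G U k) i|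
      ≤ (K + 2 * M * B) / c * h := by
  set V := eulerScheme h τ a b G U k
  set s := G (i + 1) * b (gridSlope h V (i + 1))
  set f := a (gridSlope h V (i + 1)) - a (gridSlope h V i)
  have hs : |s| ≤ M * B := by
    rw [abs_mul]
    gcongr
    exacts [(abs_nonneg _).trans (hG i), hG _, hab.abs_source_le _]
  have hincr : |f / h + s| ≤ K + M * B := by
    have := abs_eulerScheme_succ_sub_le hab hst hG hU k (i + 1)
    rw [eulerScheme_succ, eulerStep, add_sub_cancel_left, add_sub_cancel_right, abs_mul,
      abs_of_pos hst.step_pos, mul_comm] at this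
    exact le_of_mul_le_mul_right this hst.step_pos
  have hflux : |f / h| ≤ K + 2 * M * B :=
    calc |f / h| = |f / h + s - s| := by rw [add_sub_cancel_right]
      _ ≤ |f / h + s| + |s| := abs_sub _ _
      _ ≤ K + 2 * M * B := by linarith
  rw [abs_div, abs_of_pos hst.mesh_pos, div_le_iff₀ hst.mesh_pos] at hflux
  rw [div_mul_eq_mul_div, le_div_iff₀' hab.pos]
  exact (hab.mul_abs_sub_le _ _).trans hflux

end Scheme

/-! ### Piecewise constant interpolants -/

/-- The function on `ℝ × ℝ` that is constant on the cells of size `h × τ` with the values of the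
space-time grid function `U`. Before time `0` it has the values of `U 0`. -/
def gridInterp (h τ : ℝ) (U : ℕ → ℤ → ℝ) (x t : ℝ) : ℝ := U ⌊t / τ⌋₊ ⌊x / h⌋

theorem abs_natFloor_sub_natFloor_le (a b : ℝ) : |(⌊a⌋₊ : ℝ) - ⌊b⌋₊| ≤ |a - b| + 1 := by
  have hcast (a : ℝ) : (⌊a⌋₊ : ℝ) = max (⌊a⌋ : ℝ) 0 := by
    rw [← Int.floor_toNat]
    exact_mod_cast congrArg (Int.cast (R := ℝ)) (Int.toNat_eq_max ⌊a⌋)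
  rw [hcast, hcast]
  exact (abs_max_sub_max_le_abs _ _ _).trans (abs_floor_sub_floor_le a b)

theorem floor_sub_self_div {h : ℝ} (hh : 0 < h) (x : ℝ) : ⌊(x - h) / h⌋ = ⌊x / h⌋ - 1 := by
  rw [sub_div, div_self hh.ne', Int.floor_sub_one]

theorem floor_add_one_div {h : ℝ} {N : ℤ} (hN : N * h = 1) (x : ℝ) :
    ⌊(x + 1) / h⌋ = ⌊x / h⌋ + N := by
  rw [add_div, one_div, ← eq_inv_of_mul_eq_one_left hN, Int.floor_add_intCast]

theorem natFloor_add_self_div {τ t : ℝ} (hτ : 0 < τ) (ht : 0 ≤ t) :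
    ⌊(t + τ) / τ⌋₊ = ⌊t / τ⌋₊ + 1 := by
  rw [add_div, div_self hτ.ne', Nat.floor_add_one (div_nonneg ht hτ.le)]

theorem mul_abs_floor_div_sub_le {h : ℝ} (hh : 0 < h) (x y : ℝ) :
    |(⌊y / h⌋ : ℝ) - ⌊x / h⌋| * h ≤ |y - x| + h := by
  have := mul_le_mul_of_nonneg_right (abs_floor_sub_floor_le (y / h) (x / h)) hh.le
  rwa [add_mul, one_mul, ← sub_div, abs_div, abs_of_pos hh, div_mul_cancel₀ _ hh.ne'] at this

section GridInterp

variable {h τ C L : ℝ} {U : ℕ → ℤ → ℝ}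

theorem measurable_gridInterp (h τ : ℝ) (U : ℕ → ℤ → ℝ) :
    Measurable (Function.uncurry (gridInterp h τ U)) :=
  (Measurable.of_discrete (f := Function.uncurry U)).comp
    ((Nat.measurable_floor.comp (measurable_snd.div_const τ)).prodMk
      (Int.measurable_floor.comp (measurable_fst.div_const h)))

theorem gridInterp_add_one {N : ℤ} (hN : N * h = 1) (hU : ∀ k i, U k (i + N) = U k i)
    (x t : ℝ) : gridInterp h τ U (x + 1) t = gridInterp h τ U x t := by
  rw [gridInterp, floor_add_one_div hN, hU, gridInterp]

theorem abs_gridInterp_sub_le_space (hh : 0 < h) (hU : ∀ k i, |U k (i + 1) - U k i| ≤ C * h)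
    (x y t : ℝ) : |gridInterp h τ U y t - gridInterp h τ U x t| ≤ C * (|y - x| + h) := by
  have hC : 0 ≤ C := nonneg_of_mul_nonneg_left ((abs_nonneg _).trans (hU 0 0)) hh
  calc |gridInterp h τ U y t - gridInterp h τ U x t|
      ≤ C * h * |(⌊y / h⌋ : ℝ) - ⌊x / h⌋| := abs_sub_le_of_step_int (hU _) _ _
    _ = C * (|(⌊y / h⌋ : ℝ) - ⌊x / h⌋| * h) := by ring
    _ ≤ C * (|y - x| + h) := mul_le_mul_of_nonneg_left (mul_abs_floor_div_sub_le hh x y) hC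

theorem abs_gridInterp_sub_le_time (hτ : 0 < τ) (hU : ∀ k i, |U (k + 1) i - U k i| ≤ L * τ)
    (x s t : ℝ) : |gridInterp h τ U x t - gridInterp h τ U x s| ≤ L * (|t - s| + τ) := by
  wlog hst : ⌊s / τ⌋₊ ≤ ⌊t / τ⌋₊ generalizing s t
  · rw [abs_sub_comm, abs_sub_comm t]
    exact this t s (le_of_not_ge hst)
  have hL : 0 ≤ L := nonneg_of_mul_nonneg_left ((abs_nonneg _).trans (hU 0 0)) hτ
  obtain ⟨n, hn⟩ := Nat.exists_eq_add_of_le hst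
  have hfloor : (n : ℝ) * τ ≤ |t - s| + τ := by
    have := mul_le_mul_of_nonneg_right (abs_natFloor_sub_natFloor_le (t / τ) (s / τ)) hτ.le
    rw [hn, add_mul, one_mul, ← sub_div, abs_div, abs_of_pos hτ, div_mul_cancel₀ _ hτ.ne'] at this
    push_cast at this
    rwa [add_sub_cancel_left, Nat.abs_cast] at this
  rw [gridInterp, gridInterp, hn]
  calc |U (⌊s / τ⌋₊ + n) ⌊x / h⌋ - U ⌊s / τ⌋₊ ⌊x / h⌋|
      ≤ L * τ * n := abs_sub_le_of_step_nat (f := fun k => U k ⌊x / h⌋) (fun k => hU k _) _ _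
    _ = L * (n * τ) := by ring
    _ ≤ L * (|t - s| + τ) := mul_le_mul_of_nonneg_left hfloor hL

theorem abs_sub_taylor_gridInterp_le (hh : 0 < h)
    (hU : ∀ k i, |gridSlope h (U k) (i + 1) - gridSlope h (U k) i| ≤ C * h)
    (hslope : ∀ k i, |gridSlope h (U k) i| ≤ C) (x y t : ℝ) :
    |gridInterp h τ U y t - gridInterp h τ U x t
      - (y - x) * gridInterp h τ (fun k => gridSlope h (U k)) x t|
      ≤ C * (|y - x| + h) ^ 2 + C * h := by
  have hC : 0 ≤ C := (abs_nonneg _).trans (hslope 0 0)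
  set s := gridInterp h τ (fun k => gridSlope h (U k)) x t
  set d := ((⌊y / h⌋ : ℝ) - ⌊x / h⌋) * h with hd_def
  have hd : |d| ≤ |y - x| + h := by
    rw [hd_def, abs_mul, abs_of_pos hh]
    exact mul_abs_floor_div_sub_le hh x y
  have hfract : d - (y - x) = (Int.fract (x / h) - Int.fract (y / h)) * h := by
    rw [hd_def, Int.fract, Int.fract]
    field_simp
    ring
  have hround : |d - (y - x)| ≤ h := by
    rw [hfract, abs_mul, abs_of_pos hh]
    refine mul_le_of_le_one_left hh.le (abs_le.2 ⟨?_, ?_⟩) <;>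
      linarith [Int.fract_nonneg (x / h), Int.fract_nonneg (y / h), Int.fract_lt_one (x / h),
        Int.fract_lt_one (y / h)]
  calc |gridInterp h τ U y t - gridInterp h τ U x t - (y - x) * s|
      = |gridInterp h τ U y t - gridInterp h τ U x t - d * s + (d - (y - x)) * s| := by
        congr 1; ring
    _ ≤ |gridInterp h τ U y t - gridInterp h τ U x t - d * s| + |d - (y - x)| * |s| := by
        rw [← abs_mul]; exact abs_add_le _ _
    _ ≤ C * |d| ^ 2 + h * C := by
        rw [sq_abs]
        gcongr
        exacts [abs_sub_taylor_gridSlope_le hh (hU _) _ _, hslope _ _]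
    _ ≤ C * (|y - x| + h) ^ 2 + C * h := by
        rw [mul_comm h]
        gcongr

theorem gridInterp_eulerScheme_step {a b : ℝ → ℝ} {G V : ℤ → ℝ} (hh : 0 < h) (hτ : 0 < τ)
    (x : ℝ) {t : ℝ} (ht : 0 ≤ t) :
    letI U := eulerScheme h τ a b G V
    letI s := gridInterp h τ fun k => gridSlope h (U k)
    (gridInterp h τ U x (t + τ) - gridInterp h τ U x t) / τ
      = (a (s x t) - a (s (x - h) t)) / h + G ⌊x / h⌋ * b (s x t) := by
  simp only [gridInterp, natFloor_add_self_div hτ ht, floor_sub_self_div hh, eulerScheme_succ,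
    eulerStep, add_sub_cancel_left]
  rw [mul_div_cancel_left₀ _ hτ.ne']

end GridInterp

/-! ### Compactness -/

section Compactness

open Filter Topology

section AsymptoticallyLipschitz

variable {X E : Type*} [PseudoMetricSpace X] [PseudoMetricSpace E] {f : ℕ → X → E} {K : ℝ}
  {ε : ℕ → ℝ}

theorem cauchySeq_of_asymptotically_lipschitz (hε : Tendsto ε atTop (𝓝 0))
    (hf : ∀ n x y, dist (f n x) (f n y) ≤ K * (dist x y + ε n)) {D : Set X} (hD : Dense D)
    (hcauchy : ∀ y ∈ D, CauchySeq fun n => f n y) (x : X) : CauchySeq fun n => f n x := by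
  refine Metric.cauchySeq_iff.2 fun δ hδ => ?_
  obtain ⟨y, hyD, hy⟩ : ∃ y ∈ D, K * dist x y < δ / 6 := by
    have : Tendsto (fun y => K * dist x y) (𝓝 x) (𝓝 (K * dist x x)) :=
      Continuous.tendsto (by fun_prop) x
    have hnear : ∀ᶠ y in 𝓝 x, K * dist x y < δ / 6 := this.eventually_lt_const (by simpa using hδ)
    obtain ⟨y, hy, hyD⟩ := mem_closure_iff_nhds.1 (hD x) _ hnear
    exact ⟨y, hyD, hy⟩
  have hsmall : ∀ᶠ n in atTop, K * ε n < δ / 6 := by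
    have := hε.const_mul K
    rw [mul_zero] at this
    exact this.eventually_lt_const (by positivity)
  obtain ⟨n₁, hn₁⟩ := eventually_atTop.1 hsmall
  obtain ⟨n₂, hn₂⟩ := Metric.cauchySeq_iff.1 (hcauchy y hyD) (δ / 3) (by positivity)
  refine ⟨max n₁ n₂, fun m hm n hn => ?_⟩
  have hclose (k : ℕ) (hk : max n₁ n₂ ≤ k) : dist (f k x) (f k y) < δ / 3 :=
    (hf k x y).trans_lt (by linarith [hn₁ k ((le_max_left _ _).trans hk)])
  have hmid := hn₂ m ((le_max_right _ _).trans hm) n ((le_max_right _ _).trans hn)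
  have hn' := hclose n hn
  rw [dist_comm] at hn'
  linarith [hclose m hm, dist_triangle4 (f m x) (f m y) (f n y) (f n x)]

theorem exists_subseq_tendsto_of_asymptotically_lipschitz [TopologicalSpace.SeparableSpace X]
    [ProperSpace E] (hε : Tendsto ε atTop (𝓝 0))
    (hf : ∀ n x y, dist (f n x) (f n y) ≤ K * (dist x y + ε n))
    (hbdd : ∀ x, Bornology.IsBounded (Set.range fun n => f n x)) :
    ∃ (F : X → E) (φ : ℕ → ℕ),
      StrictMono φ ∧ ∀ x, Tendsto (fun n => f (φ n) x) atTop (𝓝 (F x)) := by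
  obtain ⟨D, hDcount, hD⟩ := TopologicalSpace.exists_countable_dense X
  have := hDcount.to_subtype
  have hcompact : IsCompact (Set.univ.pi fun y : D => closure (Set.range fun n => f n y)) :=
    isCompact_univ_pi fun y => (hbdd y).isCompact_closure
  obtain ⟨l, -, φ, hφ, hl⟩ := hcompact.tendsto_subseq (x := fun n (y : D) => f n y)
    fun n y _ => subset_closure ⟨n, rfl⟩
  rw [tendsto_pi_nhds] at hl
  have hcauchy := cauchySeq_of_asymptotically_lipschitz (hε.comp hφ.tendsto_atTop)
    (fun n => hf (φ n)) hD fun y hy => (hl ⟨y, hy⟩).cauchySeq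
  choose F hF using fun x => cauchySeq_tendsto_of_complete (hcauchy x)
  exact ⟨F, φ, hφ, hF⟩

end AsymptoticallyLipschitz

section Taylor

variable {f : ℕ → ℝ → ℝ} {s ε : ℕ → ℝ} {v : ℝ → ℝ} {C x : ℝ}

theorem hasDerivAt_of_tendsto_taylor {l : ℝ} (hf : ∀ y, Tendsto (fun n => f n y) atTop (𝓝 (v y)))
    (hs : Tendsto s atTop (𝓝 l)) (hε : Tendsto ε atTop (𝓝 0))
    (htaylor : ∀ n y, |f n y - f n x - (y - x) * s n| ≤ C * (|y - x| + ε n) ^ 2 + C * ε n) :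
    HasDerivAt v l x := by
  have hlim (y : ℝ) : |v y - v x - (y - x) * l| ≤ C * |y - x| ^ 2 := by
    have hbound := (((hε.const_add |y - x|).pow 2).const_mul C).add (hε.const_mul C)
    rw [add_zero, mul_zero, add_zero] at hbound
    exact le_of_tendsto_of_tendsto' (((hf y).sub (hf x)).sub (hs.const_mul _)).abs hbound
      (htaylor · y)
  refine HasDerivAt.of_isLittleO (Asymptotics.IsBigO.trans_isLittleO ?_
    (Asymptotics.isLittleO_pow_sub_sub x one_lt_two))
  refine Asymptotics.IsBigO.of_bound C (Eventually.of_forall fun y => ?_)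
  simpa using hlim y

/-- A bounded sequence of approximate slopes converges, since each of its cluster points is the
derivative of the limit. -/
theorem hasDerivAt_and_tendsto_of_taylor {R : ℝ}
    (hf : ∀ y, Tendsto (fun n => f n y) atTop (𝓝 (v y))) (hs : ∀ n, |s n| ≤ R)
    (hε : Tendsto ε atTop (𝓝 0))
    (htaylor : ∀ n y, |f n y - f n x - (y - x) * s n| ≤ C * (|y - x| + ε n) ^ 2 + C * ε n) :
    HasDerivAt v (deriv v x) x ∧ Tendsto s atTop (𝓝 (deriv v x)) := by
  have hsub (φ : ℕ → ℕ) (hφ : Tendsto φ atTop atTop) : ∃ ψ : ℕ → ℕ, StrictMono ψ ∧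
      HasDerivAt v (deriv v x) x ∧ Tendsto (fun n => s (φ (ψ n))) atTop (𝓝 (deriv v x)) := by
    obtain ⟨l, -, ψ, hψ, hl⟩ := tendsto_subseq_of_bounded (Metric.isBounded_closedBall (x := 0))
      (x := s ∘ φ) fun n => by simpa using hs (φ n)
    have hφψ := hφ.comp hψ.tendsto_atTop
    have hderiv := hasDerivAt_of_tendsto_taylor (fun y => (hf y).comp hφψ) hl (hε.comp hφψ)
      fun n => htaylor (φ (ψ n))
    rw [hderiv.deriv]
    exact ⟨ψ, hψ, hderiv, hl⟩
  obtain ⟨-, -, hderiv, -⟩ := hsub id tendsto_id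
  refine ⟨hderiv, tendsto_of_subseq_tendsto fun φ hφ => ?_⟩
  obtain ⟨ψ, -, -, hψ⟩ := hsub φ hφ
  exact ⟨ψ, hψ⟩

end Taylor

end Compactness

/-! ### Periodic extension -/

section PeriodicExtension

theorem comp_fract_eq_of_mem_Icc {E : Type*} {f : ℝ → E} (hf : f 0 = f 1) {n : ℤ} {x : ℝ}
    (hx : x ∈ Set.Icc (n : ℝ) (n + 1)) : f (Int.fract x) = f (x - n) := by
  rcases hx.2.eq_or_lt with rfl | hlt
  · simp [hf]
  · rw [Int.fract, Int.floor_eq_iff.2 ⟨hx.1, hlt⟩]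

theorem fract_mem_Icc (x : ℝ) : Int.fract x ∈ Set.Icc (0 : ℝ) 1 :=
  ⟨Int.fract_nonneg x, (Int.fract_lt_one x).le⟩

theorem lipschitzWith_comp_fract {E : Type*} [PseudoMetricSpace E] {f : ℝ → E} {K : NNReal}
    (hf : LipschitzOnWith K f (Set.Icc 0 1)) (hbc : f 0 = f 1) :
    LipschitzWith K fun x => f (Int.fract x) := by
  refine LipschitzWith.of_dist_le_mul fun x y => ?_
  wlog hxy : x ≤ y generalizing x y
  · rw [dist_comm, dist_comm x]
    exact this y x (le_of_not_ge hxy)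
  have hx := fract_mem_Icc x
  have hy := fract_mem_Icc y
  rcases (Int.floor_mono hxy).eq_or_lt with hfloor | hfloor
  · refine (hf.dist_le_mul _ hx _ hy).trans_eq ?_
    rw [Real.dist_eq, Real.dist_eq, Int.fract, Int.fract, hfloor, sub_sub_sub_cancel_right]
  · have hfloor' : (⌊x⌋ : ℝ) + 1 ≤ ⌊y⌋ := mod_cast hfloor
    calc dist (f (Int.fract x)) (f (Int.fract y))
        ≤ dist (f (Int.fract x)) (f 1) + dist (f 0) (f (Int.fract y)) := by
          rw [hbc]; exact dist_triangle _ _ _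
      _ ≤ K * dist (Int.fract x) 1 + K * dist 0 (Int.fract y) :=
          add_le_add (hf.dist_le_mul _ hx 1 (by simp)) (hf.dist_le_mul 0 (by simp) _ hy)
      _ ≤ K * dist x y := by
          rw [← mul_add]
          gcongr
          rw [Real.dist_eq, Real.dist_eq, Real.dist_eq, abs_of_nonpos (by linarith [hx.2]),
            abs_of_nonpos (by linarith [hy.1]), abs_of_nonpos (by linarith), Int.fract, Int.fract]
          linarith

theorem hasDerivAt_comp_fract {f f' : ℝ → ℝ} (hf : ∀ x ∈ Set.Icc (0 : ℝ) 1, HasDerivAt f (f' x) x)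
    (hbc : f 0 = f 1) (hbc' : f' 0 = f' 1) (x : ℝ) :
    HasDerivAt (fun y => f (Int.fract y)) (f' (Int.fract x)) x := by
  have hwithin (n : ℤ) (hx : x ∈ Set.Icc (n : ℝ) (n + 1)) :
      HasDerivWithinAt (fun y => f (Int.fract y)) (f' (Int.fract x))
        (Set.Icc (n : ℝ) (n + 1)) x := by
    rw [comp_fract_eq_of_mem_Icc hbc' hx]
    have := (hf (x - n) ⟨by linarith [hx.1], by linarith [hx.2]⟩).comp_sub_const x (n : ℝ)
    exact this.hasDerivWithinAt.congr (fun y hy => comp_fract_eq_of_mem_Icc hbc hy)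
      (comp_fract_eq_of_mem_Icc hbc hx)
  have hright := hwithin ⌊x⌋ ⟨Int.floor_le x, (Int.lt_floor_add_one x).le⟩
  rcases (Int.floor_le x).eq_or_lt with hx | hx
  · have hleft := hwithin (⌊x⌋ - 1) (by push_cast; rw [hx]; exact ⟨by linarith, by linarith⟩)
    push_cast at hleft
    rw [hx] at hleft hright
    have := hleft.union hright
    rw [sub_add_cancel, Set.Icc_union_Icc_eq_Icc (by linarith) (by linarith)] at this
    exact this.hasDerivAt (Icc_mem_nhds (by linarith) (by linarith))
  · exact hright.hasDerivAt (Icc_mem_nhds hx (Int.lt_floor_add_one x))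

theorem abs_gridSlope_sample_succ_sub_le {w w' : ℝ → ℝ} {K : NNReal}
    (hw : ∀ x, HasDerivAt w (w' x) x) (hK : LipschitzWith K w') {h : ℝ} (hh : 0 < h) (i : ℤ) :
    letI V : ℤ → ℝ := fun i => w (i * h)
    |gridSlope h V (i + 1) - gridSlope h V i| ≤ K * h := by
  have hderiv (x : ℝ) : HasDerivAt (fun y => w (y + h) - w y) (w' (x + h) - w' x) x :=
    ((hw (x + h)).comp_add_const x h).sub (hw x)
  have hbound (x : ℝ) : ‖w' (x + h) - w' x‖ ≤ K * h := by
    simpa [Real.dist_eq, abs_of_pos hh] using hK.dist_le_mul (x + h) x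
  have hmv := convex_univ.norm_image_sub_le_of_norm_hasDerivWithin_le
    (fun x _ => (hderiv x).hasDerivWithinAt) (fun x _ => hbound x) (Set.mem_univ (i * h))
    (Set.mem_univ ((i + 1 : ℤ) * h))
  have hdiff : ((i + 1 : ℤ) : ℝ) * h - i * h = h := by push_cast; ring
  rw [hdiff, Real.norm_eq_abs, Real.norm_eq_abs, abs_of_pos hh] at hmv
  have hshift (j : ℤ) : ((j + 1 : ℤ) : ℝ) * h = j * h + h := by push_cast; ring
  simp only [gridSlope]
  rw [← sub_div, abs_div, abs_of_pos hh, div_le_iff₀ hh, hshift (i + 1), hshift i]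
  rwa [hshift i] at hmv

end PeriodicExtension

/-! ### Averaged forcing -/

/-- The average of `g` over the grid cell `[i h, (i + 1) h]`. The forcing is only bounded and
measurable, so it cannot be sampled. -/
def cellAverage (h : ℝ) (g : ℝ → ℝ) (i : ℤ) : ℝ := ⨍ y in (i * h)..((i + 1) * h), g y

section CellAverage

open Filter Topology

variable {g : ℝ → ℝ}

theorem abs_cellAverage_le {M : ℝ} (hg : ∀ x, |g x| ≤ M) {h : ℝ} (hh : 0 < h) (i : ℤ) :
    |cellAverage h g i| ≤ M := by
  have hlen : ((i : ℝ) + 1) * h - i * h = h := by ring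
  have := intervalIntegral.norm_integral_le_of_norm_le_const (f := g) (C := M)
    (a := i * h) (b := (i + 1) * h) fun x _ => hg x
  rw [hlen, abs_of_pos hh] at this
  rwa [cellAverage, interval_average_eq_div, hlen, abs_div, abs_of_pos hh, div_le_iff₀ hh]

theorem cellAverage_add_period (hg : Function.Periodic g 1) {h : ℝ} {N : ℤ} (hN : N * h = 1)
    (i : ℤ) : cellAverage h g (i + N) = cellAverage h g i := by
  have hleft : ((i + N : ℤ) : ℝ) * h = i * h + 1 := by push_cast; linarith
  have hright : (((i + N : ℤ) : ℝ) + 1) * h = (i + 1) * h + 1 := by push_cast; linarith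
  rw [cellAverage, cellAverage, interval_average_eq_div, interval_average_eq_div, hleft, hright,
    ← intervalIntegral.integral_comp_add_right, add_sub_add_right_eq_sub]
  simp only [hg _]

theorem cellAverage_eq_setAverage_closedBall {h : ℝ} (hh : 0 < h) (g : ℝ → ℝ) (i : ℤ) :
    cellAverage h g i = ⨍ y in Metric.closedBall ((i + 1 / 2) * h) (h / 2), g y := by
  have hleft : ((i : ℝ) + 1 / 2) * h - h / 2 = i * h := by ring
  have hright : ((i : ℝ) + 1 / 2) * h + h / 2 = (i + 1) * h := by ring
  rw [cellAverage, Set.uIoc_of_le (by nlinarith), Real.closedBall_eq_Icc, hleft, hright]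
  exact setAverage_congr Ioc_ae_eq_Icc

theorem ae_tendsto_cellAverage (hg : LocallyIntegrable g) {h : ℕ → ℝ}
    (hh : Tendsto h atTop (𝓝[>] 0)) :
    ∀ᵐ x, Tendsto (fun n => cellAverage (h n) g ⌊x / h n⌋) atTop (𝓝 (g x)) := by
  filter_upwards [IsUnifLocDoublingMeasure.ae_tendsto_average volume hg 1] with x hx
  have hpos : ∀ᶠ n in atTop, 0 < h n := hh.eventually self_mem_nhdsWithin
  have hradius : Tendsto (fun n => h n / 2) atTop (𝓝[>] 0) := by
    refine tendsto_nhdsWithin_iff.2 ⟨?_, hpos.mono fun n hn => half_pos hn⟩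
    simpa using (tendsto_nhds_of_tendsto_nhdsWithin hh).div_const 2
  refine (hx (fun n => (⌊x / h n⌋ + 1 / 2) * h n) _ hradius ?_).congr' ?_
  · filter_upwards [hpos] with n hn
    have hlo := (le_div_iff₀ hn).1 (Int.floor_le (x / h n))
    have hhi := (div_lt_iff₀ hn).1 (Int.lt_floor_add_one (x / h n))
    rw [one_mul, Real.closedBall_eq_Icc]
    exact ⟨by linarith, by linarith⟩
  · filter_upwards [hpos] with n hn
    rw [cellAverage_eq_setAverage_closedBall hn]

end CellAverage

/-! ### Integrals over a periodic strip -/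

section Strip

open Filter Topology

/-- Lebesgue measure on `(0, 1] × ℝ`: one period in space, all times. -/
def stripMeasure : Measure (ℝ × ℝ) := (volume.restrict (Set.Ioc 0 1)).prod volume

theorem stripMeasure_absolutelyContinuous : stripMeasure ≪ volume :=
  Measure.restrict_le_self.absolutelyContinuous.prod Measure.AbsolutelyContinuous.rfl

theorem measurePreserving_stripMeasure_add_time (τ : ℝ) :
    MeasurePreserving (fun p : ℝ × ℝ => (p.1, p.2 + τ)) stripMeasure stripMeasure :=
  (MeasurePreserving.id _).prod (measurePreserving_add_right volume τ)

theorem ae_stripMeasure_of_ae_space {q : ℝ → Prop} (hq : ∀ᵐ x, q x) :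
    ∀ᵐ p ∂stripMeasure, q p.1 :=
  Measure.quasiMeasurePreserving_fst.ae (ae_restrict_of_ae hq)

theorem integral_stripMeasure_add_time (F : ℝ × ℝ → ℝ) (τ : ℝ) :
    ∫ p, F (p.1, p.2 + τ) ∂stripMeasure = ∫ p, F p ∂stripMeasure :=
  (measurePreserving_stripMeasure_add_time τ).integral_comp
    ((MeasurableEmbedding.id.prodMap (measurableEmbedding_addRight τ))) F

theorem integral_stripMeasure_add_space {F : ℝ × ℝ → ℝ} (hper : ∀ x t, F (x + 1, t) = F (x, t))
    {h : ℝ} (hF : Integrable F stripMeasure)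
    (hFh : Integrable (fun p => F (p.1 + h, p.2)) stripMeasure) :
    ∫ p, F (p.1 + h, p.2) ∂stripMeasure = ∫ p, F p ∂stripMeasure := by
  rw [stripMeasure, integral_prod_symm _ hF, integral_prod_symm _ hFh]
  refine integral_congr_ae (Eventually.of_forall fun t => ?_)
  have hperiod : Function.Periodic (fun x => F (x, t)) 1 := fun x => hper x t
  have := hperiod.intervalIntegral_add_eq h 0
  simp only [← intervalIntegral.integral_of_le zero_le_one]
  rw [intervalIntegral.integral_comp_add_right fun x => F (x, t)]
  simpa [add_comm] using this

/-- `F` is measurable, vanishes for times outside `[α, β]`, and is bounded by `A`: the functions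
to which dominated convergence on the strip applies. -/
structure StripBounded (F : ℝ × ℝ → ℝ) (A α β : ℝ) : Prop where
  measurable : Measurable F
  abs_le : ∀ p, p.2 ∈ Set.Icc α β → |F p| ≤ A
  eq_zero : ∀ p, p.2 ∉ Set.Icc α β → F p = 0

theorem integrable_indicator_strip (A α β : ℝ) :
    Integrable ((Prod.snd ⁻¹' Set.Icc α β).indicator fun _ => A) stripMeasure := by
  rw [integrable_indicator_iff (measurable_snd measurableSet_Icc)]
  refine integrableOn_const (ne_of_lt ?_)
  rw [← Set.univ_prod, stripMeasure, Measure.prod_prod]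
  exact ENNReal.mul_lt_top (by simp) (by simp)

namespace StripBounded

variable {F Q w : ℝ × ℝ → ℝ} {A D α β : ℝ}

theorem norm_le_indicator (hF : StripBounded F A α β) (p : ℝ × ℝ) :
    ‖F p‖ ≤ (Prod.snd ⁻¹' Set.Icc α β).indicator (fun _ => A) p := by
  by_cases hp : p.2 ∈ Set.Icc α β
  · rw [Set.indicator_of_mem (by exact hp)]
    exact hF.abs_le p hp
  · rw [Set.indicator_of_notMem (by exact hp), hF.eq_zero p hp, norm_zero]

theorem integrable (hF : StripBounded F A α β) : Integrable F stripMeasure :=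
  (integrable_indicator_strip A α β).mono' hF.measurable.aestronglyMeasurable
    (Eventually.of_forall hF.norm_le_indicator)

theorem tendsto_integral {F : ℕ → ℝ × ℝ → ℝ} {F' : ℝ × ℝ → ℝ}
    (hF : ∀ n, StripBounded (F n) A α β)
    (hlim : ∀ᵐ p ∂stripMeasure, Tendsto (fun n => F n p) atTop (𝓝 (F' p))) :
    Tendsto (fun n => ∫ p, F n p ∂stripMeasure) atTop (𝓝 (∫ p, F' p ∂stripMeasure)) :=
  tendsto_integral_of_dominated_convergence _
    (fun n => (hF n).measurable.aestronglyMeasurable) (integrable_indicator_strip A α β)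
    (fun n => Eventually.of_forall (hF n).norm_le_indicator) hlim

theorem mul (hQ : StripBounded Q D α β) (hw : Measurable w)
    (hwA : ∀ p, p.2 ∈ Set.Icc α β → |w p| ≤ A) : StripBounded (fun p => w p * Q p) (A * D) α β where
  measurable := hw.mul hQ.measurable
  abs_le p hp := by
    rw [abs_mul]
    exact mul_le_mul (hwA p hp) (hQ.abs_le p hp) (abs_nonneg _) ((abs_nonneg _).trans (hwA p hp))
  eq_zero p hp := by rw [hQ.eq_zero p hp, mul_zero]

theorem comp_add_space (hF : StripBounded F A α β) (h : ℝ) :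
    StripBounded (fun p => F (p.1 + h, p.2)) A α β where
  measurable := hF.measurable.comp ((measurable_fst.add_const h).prodMk measurable_snd)
  abs_le _ hp := hF.abs_le _ hp
  eq_zero _ hp := hF.eq_zero _ hp

theorem comp_sub_time (hF : StripBounded F A α β) (τ : ℝ) :
    StripBounded (fun p => F (p.1, p.2 - τ)) A (α + τ) (β + τ) where
  measurable := hF.measurable.comp (measurable_fst.prodMk (measurable_snd.sub_const τ))
  abs_le _ hp := hF.abs_le _ ⟨by linarith [hp.1], by linarith [hp.2]⟩
  eq_zero _ hp := hF.eq_zero _ fun h => hp ⟨by linarith [h.1], by linarith [h.2]⟩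

theorem integral_add_space (hF : StripBounded F A α β) (hper : ∀ x t, F (x + 1, t) = F (x, t))
    (h : ℝ) : ∫ p, F (p.1 + h, p.2) ∂stripMeasure = ∫ p, F p ∂stripMeasure :=
  integral_stripMeasure_add_space hper hF.integrable (hF.comp_add_space h).integrable

end StripBounded

/-- Test functions on the strip: `K`-Lipschitz, `1`-periodic in space, and supported in the times
`[α, β]`, with `α > 0`. -/
structure LipTest (P : ℝ × ℝ → ℝ) (K : NNReal) (α β : ℝ) : Prop where
  lipschitz : LipschitzWith K P
  periodic : ∀ x t, P (x + 1, t) = P (x, t)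
  pos : 0 < α
  eq_zero : ∀ p, p.2 ∉ Set.Icc α β → P p = 0

namespace LipTest

variable {P : ℝ × ℝ → ℝ} {K : NNReal} {α β : ℝ}

theorem abs_sub_time_le (hP : LipTest P K α β) (x s t : ℝ) :
    |P (x, t) - P (x, s)| ≤ K * |t - s| := by
  simpa [Prod.dist_eq, Real.dist_eq] using hP.lipschitz.dist_le_mul (x, t) (x, s)

theorem abs_sub_space_le (hP : LipTest P K α β) (x y t : ℝ) :
    |P (y, t) - P (x, t)| ≤ K * |y - x| := by
  simpa [Prod.dist_eq, Real.dist_eq] using hP.lipschitz.dist_le_mul (y, t) (x, t)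

theorem stripBounded (hP : LipTest P K α β) : StripBounded P (K * (β + 1 - α)) α β where
  measurable := hP.lipschitz.continuous.measurable
  abs_le p hp := by
    have := hP.abs_sub_time_le p.1 (β + 1) p.2
    rw [hP.eq_zero (p.1, β + 1) (fun h => by linarith [h.2]), sub_zero,
      abs_of_nonpos (a := p.2 - (β + 1)) (by linarith [hp.2])] at this
    exact this.trans (mul_le_mul_of_nonneg_left (by linarith [hp.1]) K.2)
  eq_zero := hP.eq_zero

theorem stripBounded_timeQuotient (hP : LipTest P K α β) {τ : ℝ} (hτ : 0 < τ) (hτ1 : τ ≤ 1) :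
    StripBounded (fun p => (P (p.1, p.2 - τ) - P p) / τ) K α (β + 1) where
  measurable := ((hP.stripBounded.comp_sub_time τ).measurable.sub
    hP.stripBounded.measurable).div_const τ
  abs_le p _ := by
    rw [abs_div, abs_of_pos hτ, div_le_iff₀ hτ]
    simpa [abs_of_pos hτ] using hP.abs_sub_time_le p.1 p.2 (p.2 - τ)
  eq_zero p hp := by
    rw [hP.eq_zero (p.1, p.2 - τ) fun h => hp ⟨by linarith [h.1], by linarith [h.2]⟩,
      hP.eq_zero p fun h => hp ⟨h.1, by linarith [h.2]⟩, sub_zero, zero_div]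

theorem stripBounded_spaceQuotient (hP : LipTest P K α β) {h : ℝ} (hh : 0 < h) :
    StripBounded (fun p => (P (p.1 + h, p.2) - P p) / h) K α β where
  measurable := ((hP.stripBounded.comp_add_space h).measurable.sub
    hP.stripBounded.measurable).div_const h
  abs_le p _ := by
    rw [abs_div, abs_of_pos hh, div_le_iff₀ hh]
    simpa [abs_of_pos hh] using hP.abs_sub_space_le p.1 (p.1 + h) p.2
  eq_zero p hp := by rw [hP.eq_zero (p.1 + h, p.2) hp, hP.eq_zero p hp, sub_zero, zero_div]

variable {w : ℝ × ℝ → ℝ} {A : ℝ}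

/-- The two integrands differ by a difference of `H p = w p * P (p.1, p.2 - τ)`, whose integral
is invariant under translation in time. -/
theorem integral_timeQuotient_mul (hP : LipTest P K α β) (hw : Measurable w)
    (hwA : ∀ p, p.2 ∈ Set.Icc α (β + 1) → |w p| ≤ A) {τ : ℝ} (hτ : 0 < τ) (hτ1 : τ ≤ 1) :
    ∫ p, (w (p.1, p.2 + τ) - w p) / τ * P p ∂stripMeasure
      = ∫ p, w p * ((P (p.1, p.2 - τ) - P p) / τ) ∂stripMeasure := by
  let H : ℝ × ℝ → ℝ := fun p => w p * P (p.1, p.2 - τ)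
  have hH : Integrable H stripMeasure := ((hP.stripBounded.comp_sub_time τ).mul hw
    fun p hp => hwA p ⟨by linarith [hp.1], by linarith [hp.2]⟩).integrable
  have hHτ : Integrable (fun p => H (p.1, p.2 + τ)) stripMeasure :=
    (measurePreserving_stripMeasure_add_time τ).integrable_comp_of_integrable hH
  have hdiff : Integrable (fun p => H (p.1, p.2 + τ) - H p) stripMeasure := hHτ.sub hH
  have hquot := ((hP.stripBounded_timeQuotient hτ hτ1).mul hw hwA).integrable
  calc ∫ p, (w (p.1, p.2 + τ) - w p) / τ * P p ∂stripMeasure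
      = ∫ p, ((H (p.1, p.2 + τ) - H p) / τ
          + w p * ((P (p.1, p.2 - τ) - P p) / τ)) ∂stripMeasure := by
        congr 1 with p
        simp only [H, add_sub_cancel_right]
        ring
    _ = ∫ p, w p * ((P (p.1, p.2 - τ) - P p) / τ) ∂stripMeasure := by
        rw [integral_add (hdiff.div_const τ) hquot, integral_div, integral_sub hHτ hH,
          integral_stripMeasure_add_time, sub_self, zero_div, zero_add]

theorem integral_spaceQuotient_mul (hP : LipTest P K α β) (hw : Measurable w)
    (hwA : ∀ p, p.2 ∈ Set.Icc α β → |w p| ≤ A) (hper : ∀ x t, w (x + 1, t) = w (x, t))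
    {h : ℝ} (hh : 0 < h) :
    ∫ p, (w p - w (p.1 - h, p.2)) / h * P p ∂stripMeasure
      = -∫ p, w p * ((P (p.1 + h, p.2) - P p) / h) ∂stripMeasure := by
  let H : ℝ × ℝ → ℝ := fun p => w (p.1 - h, p.2) * P p
  have hH : StripBounded H (A * (K * (β + 1 - α))) α β := hP.stripBounded.mul
    (hw.comp ((measurable_fst.sub_const h).prodMk measurable_snd)) fun p hp => hwA _ hp
  have hHper (x t : ℝ) : H (x + 1, t) = H (x, t) := by
    simp only [H, add_sub_right_comm x 1 h, hper, hP.periodic]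
  have hHh := (hH.comp_add_space h).integrable
  have hdiff : Integrable (fun p => H (p.1 + h, p.2) - H p) stripMeasure := hHh.sub hH.integrable
  have hquot := ((hP.stripBounded_spaceQuotient hh).mul hw hwA).integrable
  calc ∫ p, (w p - w (p.1 - h, p.2)) / h * P p ∂stripMeasure
      = ∫ p, ((H (p.1 + h, p.2) - H p) / h
          - w p * ((P (p.1 + h, p.2) - P p) / h)) ∂stripMeasure := by
        congr 1 with p
        simp only [H, add_sub_cancel_right]
        ring
    _ = -∫ p, w p * ((P (p.1 + h, p.2) - P p) / h) ∂stripMeasure := by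
        rw [integral_sub (hdiff.div_const h) hquot, integral_div,
          integral_sub hHh hH.integrable, hH.integral_add_space hHper, sub_self, zero_div, zero_sub]

end LipTest

end Strip

/-! ### Passage to the limit in the weak formulation -/

section WeakLimit

open Filter Topology

theorem tendsto_quotient_deriv {f : ℝ → ℝ} {x : ℝ} (hf : DifferentiableAt ℝ f x) {h : ℕ → ℝ}
    (hh : Tendsto h atTop (𝓝[≠] 0)) :
    Tendsto (fun n => (f (x + h n) - f x) / h n) atTop (𝓝 (deriv f x)) := by
  simpa [Function.comp_def, div_eq_inv_mul] using hf.hasDerivAt.tendsto_slope_zero.comp hh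

theorem tendsto_backward_quotient_deriv {f : ℝ → ℝ} {x : ℝ} (hf : DifferentiableAt ℝ f x)
    {h : ℕ → ℝ} (hh : Tendsto h atTop (𝓝[≠] 0)) :
    Tendsto (fun n => (f (x - h n) - f x) / h n) atTop (𝓝 (-deriv f x)) := by
  have hneg : Tendsto (fun n => -h n) atTop (𝓝[≠] 0) := by
    refine tendsto_nhdsWithin_iff.2 ⟨?_, (hh.eventually self_mem_nhdsWithin).mono fun n hn => by
      simpa using hn⟩
    simpa using (tendsto_nhds_of_tendsto_nhdsWithin hh).neg
  simpa [← sub_eq_add_neg, div_neg] using (tendsto_quotient_deriv hf hneg).neg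

theorem ae_stripMeasure_differentiableAt {F : ℝ × ℝ → ℝ} {K : NNReal} (hF : LipschitzWith K F) :
    ∀ᵐ p ∂stripMeasure, DifferentiableAt ℝ (fun x => F (x, p.2)) p.1 ∧
      DifferentiableAt ℝ (fun t => F (p.1, t)) p.2 := by
  filter_upwards [stripMeasure_absolutelyContinuous.ae_le hF.ae_differentiableAt] with p hp
  exact ⟨hp.comp p.1 (f := fun x => (x, p.2)) (by fun_prop),
    hp.comp p.2 (f := fun t => (p.1, t)) (by fun_prop)⟩

variable {P : ℝ × ℝ → ℝ} {K : NNReal} {α β : ℝ}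

theorem LipTest.integral_timeDeriv_mul (hP : LipTest P K α β) {v : ℝ × ℝ → ℝ} {L : NNReal}
    (hv : LipschitzWith L v) {A : ℝ} (hvA : ∀ p, p.2 ∈ Set.Icc α (β + 1) → |v p| ≤ A) :
    ∫ p, deriv (fun t => v (p.1, t)) p.2 * P p ∂stripMeasure
      = ∫ p, v p * -deriv (fun t => P (p.1, t)) p.2 ∂stripMeasure := by
  let τ : ℕ → ℝ := fun n => 1 / ((n : ℝ) + 1)
  have hτ (n : ℕ) : 0 < τ n := Nat.one_div_pos_of_nat
  have hτ1 (n : ℕ) : τ n ≤ 1 := div_le_one_of_le₀ (by simp) (by positivity)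
  have hτ0 : Tendsto τ atTop (𝓝[≠] 0) := tendsto_nhdsWithin_iff.2
    ⟨tendsto_one_div_add_atTop_nhds_zero_nat, Eventually.of_forall fun n => (hτ n).ne'⟩
  have hmeas := hv.continuous.measurable
  have hquot (n : ℕ) (p : ℝ × ℝ) : |(v (p.1, p.2 + τ n) - v p) / τ n| ≤ L := by
    rw [abs_div, abs_of_pos (hτ n), div_le_iff₀ (hτ n)]
    simpa [Prod.dist_eq, Real.dist_eq, abs_of_pos (hτ n), max_eq_right (hτ n).le]
      using hv.dist_le_mul (p.1, p.2 + τ n) (p.1, p.2)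
  have hleft := StripBounded.tendsto_integral
    (fun n => hP.stripBounded.mul
      (((hmeas.comp (measurable_fst.prodMk (measurable_snd.add_const (τ n)))).sub
        hmeas).div_const _)
      fun p _ => hquot n p)
    ((ae_stripMeasure_differentiableAt hv).mono fun p hp =>
      (tendsto_quotient_deriv hp.2 hτ0).mul_const (P p))
  have hright := StripBounded.tendsto_integral
    (fun n => (hP.stripBounded_timeQuotient (hτ n) (hτ1 n)).mul hmeas hvA)
    ((ae_stripMeasure_differentiableAt hP.lipschitz).mono fun p hp =>
      (tendsto_backward_quotient_deriv hp.2 hτ0).const_mul (v p))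
  exact tendsto_nhds_unique hleft
    (hright.congr fun n => (hP.integral_timeQuotient_mul hmeas hvA (hτ n) (hτ1 n)).symm)

/-- `u` solves `u_t = f_x + S` for positive times in the sense of difference quotients: forward
in time with step `τ`, backward in space with mesh `h`. -/
structure IsDiscreteSolution (u f S : ℝ × ℝ → ℝ) (h τ : ℝ) : Prop where
  mesh_pos : 0 < h
  step_pos : 0 < τ
  step_le_one : τ ≤ 1
  measurable : Measurable u
  measurable_flux : Measurable f
  measurable_source : Measurable S
  periodic_flux : ∀ x t, f (x + 1, t) = f (x, t)
  equation : ∀ p : ℝ × ℝ, 0 ≤ p.2 →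
    (u (p.1, p.2 + τ) - u p) / τ = (f p - f (p.1 - h, p.2)) / h + S p

theorem IsDiscreteSolution.integral_eq {u f S : ℝ × ℝ → ℝ} {h τ A₁ A₂ A₃ : ℝ}
    (hu : IsDiscreteSolution u f S h τ) (hP : LipTest P K α β)
    (huA : ∀ p, p.2 ∈ Set.Icc α (β + 1) → |u p| ≤ A₁)
    (hfA : ∀ p, p.2 ∈ Set.Icc α β → |f p| ≤ A₂) (hSA : ∀ p, p.2 ∈ Set.Icc α β → |S p| ≤ A₃) :
    ∫ p, u p * ((P (p.1, p.2 - τ) - P p) / τ) ∂stripMeasure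
      + ∫ p, f p * ((P (p.1 + h, p.2) - P p) / h) ∂stripMeasure
      = ∫ p, S p * P p ∂stripMeasure := by
  have hfluxA (p : ℝ × ℝ) (hp : p.2 ∈ Set.Icc α β) :
      |(f p - f (p.1 - h, p.2)) / h| ≤ (A₂ + A₂) / h := by
    rw [abs_div, abs_of_pos hu.mesh_pos]
    have := hu.mesh_pos
    gcongr
    exact (abs_sub _ _).trans (add_le_add (hfA p hp) (hfA _ hp))
  have hflux : Integrable (fun p => (f p - f (p.1 - h, p.2)) / h * P p) stripMeasure :=
    (hP.stripBounded.mul ((hu.measurable_flux.sub (hu.measurable_flux.comp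
      ((measurable_fst.sub_const h).prodMk measurable_snd))).div_const h) hfluxA).integrable
  have hsource := (hP.stripBounded.mul hu.measurable_source hSA).integrable
  have hequation (p : ℝ × ℝ) : (u (p.1, p.2 + τ) - u p) / τ * P p
      = (f p - f (p.1 - h, p.2)) / h * P p + S p * P p := by
    rcases le_or_gt 0 p.2 with hp | hp
    · rw [hu.equation p hp, add_mul]
    · rw [hP.eq_zero p fun h => by linarith [h.1, hP.pos]]
      ring
  rw [← hP.integral_timeQuotient_mul hu.measurable huA hu.step_pos hu.step_le_one,
    integral_congr_ae (Eventually.of_forall hequation), integral_add hflux hsource,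
    hP.integral_spaceQuotient_mul hu.measurable_flux hfA hu.periodic_flux hu.mesh_pos]
  ring

theorem LipTest.integral_eq_of_tendsto (hP : LipTest P K α β) {u f S : ℕ → ℝ × ℝ → ℝ}
    {u' f' S' : ℝ × ℝ → ℝ} {h τ : ℕ → ℝ} {A₁ A₂ A₃ : ℝ}
    (hu : ∀ n, IsDiscreteSolution (u n) (f n) (S n) (h n) (τ n))
    (hh : Tendsto h atTop (𝓝 0)) (hτ : Tendsto τ atTop (𝓝 0))
    (huA : ∀ n p, p.2 ∈ Set.Icc α (β + 1) → |u n p| ≤ A₁)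
    (hfA : ∀ n p, p.2 ∈ Set.Icc α β → |f n p| ≤ A₂)
    (hSA : ∀ n p, p.2 ∈ Set.Icc α β → |S n p| ≤ A₃)
    (hu' : ∀ᵐ p ∂stripMeasure, Tendsto (fun n => u n p) atTop (𝓝 (u' p)))
    (hf' : ∀ᵐ p ∂stripMeasure, Tendsto (fun n => f n p) atTop (𝓝 (f' p)))
    (hS' : ∀ᵐ p ∂stripMeasure, Tendsto (fun n => S n p) atTop (𝓝 (S' p))) :
    ∫ p, u' p * -deriv (fun t => P (p.1, t)) p.2 ∂stripMeasure
      + ∫ p, f' p * deriv (fun x => P (x, p.2)) p.1 ∂stripMeasure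
      = ∫ p, S' p * P p ∂stripMeasure := by
  have hh0 : Tendsto h atTop (𝓝[≠] 0) := tendsto_nhdsWithin_iff.2
    ⟨hh, Eventually.of_forall fun n => (hu n).mesh_pos.ne'⟩
  have hτ0 : Tendsto τ atTop (𝓝[≠] 0) := tendsto_nhdsWithin_iff.2
    ⟨hτ, Eventually.of_forall fun n => (hu n).step_pos.ne'⟩
  have hdiff := ae_stripMeasure_differentiableAt hP.lipschitz
  have htime := StripBounded.tendsto_integral
    (fun n => (hP.stripBounded_timeQuotient (hu n).step_pos (hu n).step_le_one).mul
      (hu n).measurable (huA n))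
    ((hu'.and hdiff).mono fun p hp => hp.1.mul (tendsto_backward_quotient_deriv hp.2.2 hτ0))
  have hspace := StripBounded.tendsto_integral
    (fun n => (hP.stripBounded_spaceQuotient (hu n).mesh_pos).mul (hu n).measurable_flux (hfA n))
    ((hf'.and hdiff).mono fun p hp => hp.1.mul (tendsto_quotient_deriv hp.2.1 hh0))
  have hsource := StripBounded.tendsto_integral
    (fun n => hP.stripBounded.mul (hu n).measurable_source (hSA n))
    (hS'.mono fun p hp => hp.mul_const (P p))
  exact tendsto_nhds_unique (htime.add hspace)
    (hsource.congr fun n => ((hu n).integral_eq hP (huA n) (hfA n) (hSA n)).symm)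

end WeakLimit

/-! ### Global solutions of the periodic problem -/

section Existence

open Filter Topology

/-- The data of the `1`-periodic initial value problem `v_t = (a(v_x))_x + g b(v_x)`,
`v(·, 0) = u₀`; `u₀'` is the derivative of `u₀`. -/
structure ParabolicData (a b g u₀ u₀' : ℝ → ℝ) (c B M : ℝ) (K : NNReal) : Prop extends
    UniformlyParabolic a b c B where
  measurable_forcing : Measurable g
  abs_forcing_le : ∀ x, |g x| ≤ M
  periodic_forcing : Function.Periodic g 1
  periodic_initial : Function.Periodic u₀ 1
  hasDerivAt_initial : ∀ x, HasDerivAt u₀ (u₀' x) x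
  lipschitz_initial_slope : LipschitzWith K u₀'

/-- The explicit scheme started from the grid values of `u₀`, with cell averages of `g`. -/
def gridSolution (h τ : ℝ) (a b g u₀ : ℝ → ℝ) : ℕ → ℤ → ℝ :=
  eulerScheme h τ a b (cellAverage h g) fun i => u₀ (i * h)

/-- The piecewise constant interpolant of the grid solution. -/
def approxSolution (h τ : ℝ) (a b g u₀ : ℝ → ℝ) : ℝ → ℝ → ℝ :=
  gridInterp h τ (gridSolution h τ a b g u₀)

/-- The piecewise constant interpolant of the difference quotients of the grid solution. -/
def approxSlope (h τ : ℝ) (a b g u₀ : ℝ → ℝ) : ℝ → ℝ → ℝ :=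
  gridInterp h τ fun k => gridSlope h (gridSolution h τ a b g u₀ k)

namespace ParabolicData

variable {a b g u₀ u₀' : ℝ → ℝ} {c B M : ℝ} {K : NNReal} {h τ : ℝ} {N : ℤ}

theorem forcing_bound_nonneg (hd : ParabolicData a b g u₀ u₀' c B M K) : 0 ≤ M :=
  (abs_nonneg _).trans (hd.abs_forcing_le 0)

theorem gridSolution_add_period (hd : ParabolicData a b g u₀ u₀' c B M K) (hN : N * h = 1)
    (k : ℕ) (i : ℤ) :
    gridSolution h τ a b g u₀ k (i + N) = gridSolution h τ a b g u₀ k i := by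
  refine eulerScheme_add_period (cellAverage_add_period hd.periodic_forcing hN) (fun i => ?_) k i
  push_cast
  rw [add_mul, hN, hd.periodic_initial]

theorem abs_gridSolution_succ_sub_le (hd : ParabolicData a b g u₀ u₀' c B M K)
    (hst : Stable h τ c M) (k : ℕ) (i : ℤ) :
    |gridSolution h τ a b g u₀ (k + 1) i - gridSolution h τ a b g u₀ k i| ≤ (K + M * B) * τ :=
  abs_eulerScheme_succ_sub_le hd.toUniformlyParabolic hst
    (abs_cellAverage_le hd.abs_forcing_le hst.mesh_pos)
    (abs_gridSlope_sample_succ_sub_le hd.hasDerivAt_initial hd.lipschitz_initial_slope hst.mesh_pos)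
    k i

theorem abs_gridSlope_succ_sub_le (hd : ParabolicData a b g u₀ u₀' c B M K)
    (hst : Stable h τ c M) (k : ℕ) (i : ℤ) :
    |gridSlope h (gridSolution h τ a b g u₀ k) (i + 1)
      - gridSlope h (gridSolution h τ a b g u₀ k) i| ≤ (K + 2 * M * B) / c * h :=
  abs_gridSlope_eulerScheme_succ_sub_le hd.toUniformlyParabolic hst
    (abs_cellAverage_le hd.abs_forcing_le hst.mesh_pos)
    (abs_gridSlope_sample_succ_sub_le hd.hasDerivAt_initial hd.lipschitz_initial_slope hst.mesh_pos)
    k i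

theorem abs_gridSlope_le (hd : ParabolicData a b g u₀ u₀' c B M K) (hst : Stable h τ c M)
    (hN : N * h = 1) (k : ℕ) (i : ℤ) :
    |gridSlope h (gridSolution h τ a b g u₀ k) i| ≤ (K + 2 * M * B) / c :=
  abs_gridSlope_le_of_periodic hst.mesh_pos (hd.abs_gridSlope_succ_sub_le hst k) hN
    (hd.gridSolution_add_period hN k) i

theorem abs_approxSolution_sub_le_time (hd : ParabolicData a b g u₀ u₀' c B M K)
    (hst : Stable h τ c M) (x s t : ℝ) :
    |approxSolution h τ a b g u₀ x t - approxSolution h τ a b g u₀ x s|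
      ≤ (K + M * B) * (|t - s| + τ) :=
  abs_gridInterp_sub_le_time hst.step_pos (hd.abs_gridSolution_succ_sub_le hst) x s t

theorem abs_approxSolution_sub_le_space (hd : ParabolicData a b g u₀ u₀' c B M K)
    (hst : Stable h τ c M) (hN : N * h = 1) (x y t : ℝ) :
    |approxSolution h τ a b g u₀ y t - approxSolution h τ a b g u₀ x t|
      ≤ (K + 2 * M * B) / c * (|y - x| + h) := by
  refine abs_gridInterp_sub_le_space hst.mesh_pos (fun k i => ?_) x y t
  rw [← mul_gridSlope hst.mesh_pos, abs_mul, abs_of_pos hst.mesh_pos, mul_comm]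
  exact mul_le_mul_of_nonneg_right (hd.abs_gridSlope_le hst hN k i) hst.mesh_pos.le

theorem abs_approxSlope_le (hd : ParabolicData a b g u₀ u₀' c B M K) (hst : Stable h τ c M)
    (hN : N * h = 1) (x t : ℝ) : |approxSlope h τ a b g u₀ x t| ≤ (K + 2 * M * B) / c :=
  hd.abs_gridSlope_le hst hN _ _

theorem abs_approxSlope_sub_le_space (hd : ParabolicData a b g u₀ u₀' c B M K)
    (hst : Stable h τ c M) (x y t : ℝ) :
    |approxSlope h τ a b g u₀ y t - approxSlope h τ a b g u₀ x t|
      ≤ (K + 2 * M * B) / c * (|y - x| + h) :=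
  abs_gridInterp_sub_le_space hst.mesh_pos (hd.abs_gridSlope_succ_sub_le hst) x y t

theorem abs_sub_taylor_approxSolution_le (hd : ParabolicData a b g u₀ u₀' c B M K)
    (hst : Stable h τ c M) (hN : N * h = 1) (x y t : ℝ) :
    |approxSolution h τ a b g u₀ y t - approxSolution h τ a b g u₀ x t
      - (y - x) * approxSlope h τ a b g u₀ x t|
      ≤ (K + 2 * M * B) / c * (|y - x| + h) ^ 2 + (K + 2 * M * B) / c * h :=
  abs_sub_taylor_gridInterp_le hst.mesh_pos (hd.abs_gridSlope_succ_sub_le hst)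
    (hd.abs_gridSlope_le hst hN) x y t

theorem isDiscreteSolution_approxSolution (hd : ParabolicData a b g u₀ u₀' c B M K)
    (hst : Stable h τ c M) (hτ : τ ≤ 1) (hN : N * h = 1) :
    IsDiscreteSolution (fun p => approxSolution h τ a b g u₀ p.1 p.2)
      (fun p => a (approxSlope h τ a b g u₀ p.1 p.2))
      (fun p => cellAverage h g ⌊p.1 / h⌋ * b (approxSlope h τ a b g u₀ p.1 p.2)) h τ where
  mesh_pos := hst.mesh_pos
  step_pos := hst.step_pos
  step_le_one := hτ
  measurable := measurable_gridInterp _ _ _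
  measurable_flux := hd.lipschitz_flux.continuous.measurable.comp (measurable_gridInterp _ _ _)
  measurable_source :=
    ((Measurable.of_discrete (f := cellAverage h g)).comp
      (Int.measurable_floor.comp (measurable_fst.div_const h))).mul
      (hd.lipschitz_source.continuous.measurable.comp (measurable_gridInterp h τ _))
  periodic_flux x t := by
    rw [approxSlope, gridInterp_add_one hN fun k =>
      gridSlope_add_period (hd.gridSolution_add_period hN k)]
  equation p hp := gridInterp_eulerScheme_step hst.mesh_pos hst.step_pos p.1 hp

end ParabolicData

/-- Mesh sizes and time steps tending to `0` along which the scheme is stable and the meshes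
subdivide the period. -/
structure AdmissibleMeshes (c M : ℝ) (h τ : ℕ → ℝ) : Prop where
  stable : ∀ n, Stable (h n) (τ n) c M
  step_le_one : ∀ n, τ n ≤ 1
  exists_period : ∀ n, ∃ N : ℤ, N * h n = 1
  tendsto_mesh : Tendsto h atTop (𝓝 0)
  tendsto_step : Tendsto τ atTop (𝓝 0)

theorem AdmissibleMeshes.comp {c M : ℝ} {h τ : ℕ → ℝ} (hm : AdmissibleMeshes c M h τ)
    {φ : ℕ → ℕ} (hφ : StrictMono φ) :
    AdmissibleMeshes c M (fun n => h (φ n)) fun n => τ (φ n) where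
  stable n := hm.stable (φ n)
  step_le_one n := hm.step_le_one (φ n)
  exists_period n := hm.exists_period (φ n)
  tendsto_mesh := hm.tendsto_mesh.comp hφ.tendsto_atTop
  tendsto_step := hm.tendsto_step.comp hφ.tendsto_atTop

theorem exists_admissibleMeshes {c : ℝ} (hc : 0 < c) (M : ℝ) :
    ∃ h τ : ℕ → ℝ, AdmissibleMeshes c M h τ := by
  let h : ℕ → ℝ := fun n => 1 / ((n + ⌈M / c⌉₊ : ℕ) + 1)
  have hpos (n : ℕ) : 0 < h n := Nat.one_div_pos_of_nat
  have hle (n : ℕ) : h n ≤ 1 := div_le_one_of_le₀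
    (le_add_of_nonneg_left (Nat.cast_nonneg _)) (by positivity)
  have hh : Tendsto h atTop (𝓝 0) :=
    tendsto_one_div_add_atTop_nhds_zero_nat.comp (tendsto_add_atTop_nat ⌈M / c⌉₊)
  refine ⟨h, fun n => h n ^ 2 / 4, fun n => ⟨hpos n, ?_, ?_, ?_⟩, fun n => ?_, fun n => ?_, hh, ?_⟩
  · have := hpos n
    positivity
  · linarith
  · have hceil := (div_le_iff₀ hc).1 (Nat.le_ceil (M / c))
    rw [mul_one_div, div_le_iff₀ (by positivity)]
    push_cast
    nlinarith [mul_nonneg hc.le (Nat.cast_nonneg (α := ℝ) n)]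
  · nlinarith [hpos n, hle n]
  · refine ⟨n + ⌈M / c⌉₊ + 1, ?_⟩
    push_cast
    simp only [h]
    push_cast
    exact mul_one_div_cancel (by positivity)
  · simpa using (hh.pow 2).div_const 4

/-- Regularity of the global solutions: `v` is `1`-periodic and `C^{1,1}` in space, with constant
`C`, and `L`-Lipschitz in time. -/
structure SpaceTimeRegular (L C : ℝ) (v : ℝ → ℝ → ℝ) : Prop where
  periodic : ∀ x t, v (x + 1) t = v x t
  abs_sub_time_le : ∀ x s t, |v x t - v x s| ≤ L * |t - s|
  differentiable : ∀ t, Differentiable ℝ fun x => v x t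
  abs_slope_le : ∀ x t, |deriv (fun y => v y t) x| ≤ C
  abs_slope_sub_le : ∀ x y t, |deriv (fun z => v z t) y - deriv (fun z => v z t) x| ≤ C * |y - x|

namespace SpaceTimeRegular

variable {L C : ℝ} {v : ℝ → ℝ → ℝ}

theorem lipschitzWith_time (hv : SpaceTimeRegular L C v) (x : ℝ) : LipschitzWith L.toNNReal (v x) :=
  LipschitzWith.of_dist_le' fun s t => hv.abs_sub_time_le x t s

theorem lipschitzWith_slope (hv : SpaceTimeRegular L C v) (t : ℝ) :
    LipschitzWith C.toNNReal (deriv fun x => v x t) :=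
  LipschitzWith.of_dist_le' fun x y => hv.abs_slope_sub_le y x t

theorem lipschitzWith_space (hv : SpaceTimeRegular L C v) (t : ℝ) :
    LipschitzWith C.toNNReal fun x => v x t :=
  lipschitzWith_of_nnnorm_deriv_le (hv.differentiable t) fun x =>
    NNReal.le_toNNReal_of_coe_le (hv.abs_slope_le x t)

theorem lipschitzWith (hv : SpaceTimeRegular L C v) :
    LipschitzWith (C.toNNReal + L.toNNReal) fun p : ℝ × ℝ => v p.1 p.2 :=
  LipschitzWith.uncurry hv.lipschitzWith_space hv.lipschitzWith_time

end SpaceTimeRegular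

/-- Regular solutions, for all positive times, of the weak form of the periodic initial value
problem `v_t = (a(v_x))_x + g b(v_x)`, `v(·, 0) = u₀`. -/
structure IsGlobalSolution (a b g u₀ : ℝ → ℝ) (L C : ℝ) (v : ℝ → ℝ → ℝ) : Prop extends
    SpaceTimeRegular L C v where
  initial : ∀ x, v x 0 = u₀ x
  weak : ∀ (P : ℝ × ℝ → ℝ) (κ : NNReal) (α β : ℝ), LipTest P κ α β →
    ∫ p, deriv (v p.1) p.2 * P p ∂stripMeasure
      + ∫ p, a (deriv (fun x => v x p.2) p.1) * deriv (fun x => P (x, p.2)) p.1 ∂stripMeasure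
      = ∫ p, g p.1 * b (deriv (fun x => v x p.2) p.1) * P p ∂stripMeasure

theorem abs_floor_div_mul_sub_le {h : ℝ} (hh : 0 < h) (x : ℝ) : |⌊x / h⌋ * h - x| ≤ h := by
  have h1 := (le_div_iff₀ hh).1 (Int.floor_le (x / h))
  have h2 := (div_lt_iff₀ hh).1 (Int.lt_floor_add_one (x / h))
  rw [abs_of_nonpos (by linarith)]
  linarith

namespace ParabolicData

variable {a b g u₀ u₀' : ℝ → ℝ} {c B M : ℝ} {K : NNReal}

theorem continuous_initial (hd : ParabolicData a b g u₀ u₀' c B M K) : Continuous u₀ :=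
  continuous_iff_continuousAt.2 fun x => (hd.hasDerivAt_initial x).continuousAt

theorem exists_abs_initial_le (hd : ParabolicData a b g u₀ u₀' c B M K) : ∃ A, ∀ x, |u₀ x| ≤ A := by
  obtain ⟨A, hA⟩ := (hd.periodic_initial.isBounded_of_continuous one_ne_zero
    hd.continuous_initial).exists_norm_le
  exact ⟨A, fun x => hA _ ⟨x, rfl⟩⟩

theorem time_constant_nonneg (hd : ParabolicData a b g u₀ u₀' c B M K) : 0 ≤ K + M * B :=
  add_nonneg K.2 (mul_nonneg hd.forcing_bound_nonneg hd.bound_nonneg)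

theorem slope_constant_nonneg (hd : ParabolicData a b g u₀ u₀' c B M K) :
    0 ≤ (K + 2 * M * B) / c :=
  div_nonneg (by nlinarith [K.2, mul_nonneg hd.forcing_bound_nonneg hd.bound_nonneg]) hd.pos.le

theorem approxSolution_zero (h τ : ℝ) (x : ℝ) :
    approxSolution h τ a b g u₀ x 0 = u₀ (⌊x / h⌋ * h) := by
  simp only [approxSolution, gridInterp, gridSolution, zero_div, Nat.floor_zero]
  rfl

theorem abs_approxSolution_le (hd : ParabolicData a b g u₀ u₀' c B M K) {h τ A : ℝ}
    (hst : Stable h τ c M) (hτ : τ ≤ 1) (hA : ∀ x, |u₀ x| ≤ A) (x t : ℝ) :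
    |approxSolution h τ a b g u₀ x t| ≤ A + (K + M * B) * (|t| + 1) := by
  have htime := hd.abs_approxSolution_sub_le_time hst x 0 t
  have hinit := hA (⌊x / h⌋ * h)
  rw [approxSolution_zero, sub_zero] at htime
  have := mul_le_mul_of_nonneg_left (add_le_add_right hτ |t|) hd.time_constant_nonneg
  linarith [abs_sub_abs_le_abs_sub (approxSolution h τ a b g u₀ x t) (u₀ (⌊x / h⌋ * h))]

theorem abs_flux_approxSlope_le (hd : ParabolicData a b g u₀ u₀' c B M K) {h τ : ℝ} {N : ℤ}
    (hst : Stable h τ c M) (hN : N * h = 1) (x t : ℝ) :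
    |a (approxSlope h τ a b g u₀ x t)| ≤ |a 0| + (K + 2 * M * B) / c :=
  abs_le_of_lipschitzWith_one hd.lipschitz_flux (hd.abs_approxSlope_le hst hN x t)

theorem abs_cellAverage_mul_source_le (hd : ParabolicData a b g u₀ u₀' c B M K) {h : ℝ}
    (hh : 0 < h) (i : ℤ) (p : ℝ) : |cellAverage h g i * b p| ≤ M * B := by
  rw [abs_mul]
  exact mul_le_mul (abs_cellAverage_le hd.abs_forcing_le hh i) (hd.abs_source_le p)
    (abs_nonneg _) hd.forcing_bound_nonneg

theorem dist_approxSolution_le (hd : ParabolicData a b g u₀ u₀' c B M K) {h τ : ℝ} {N : ℤ}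
    (hst : Stable h τ c M) (hN : N * h = 1) (p q : ℝ × ℝ) :
    dist (approxSolution h τ a b g u₀ p.1 p.2) (approxSolution h τ a b g u₀ q.1 q.2)
      ≤ ((K + 2 * M * B) / c + (K + M * B)) * (dist p q + (h + τ)) := by
  have hspace := hd.abs_approxSolution_sub_le_space hst hN q.1 p.1 p.2
  have htime := hd.abs_approxSolution_sub_le_time hst q.1 q.2 p.2
  have h1 : |p.1 - q.1| ≤ dist p q := le_max_left _ _
  have h2 : |p.2 - q.2| ≤ dist p q := le_max_right _ _
  have := hst.mesh_pos
  have := hst.step_pos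
  calc dist (approxSolution h τ a b g u₀ p.1 p.2) (approxSolution h τ a b g u₀ q.1 q.2)
      ≤ (K + 2 * M * B) / c * (|p.1 - q.1| + h) + (K + M * B) * (|p.2 - q.2| + τ) :=
        (dist_triangle _ (approxSolution h τ a b g u₀ q.1 p.2) _).trans (add_le_add hspace htime)
    _ ≤ (K + 2 * M * B) / c * (dist p q + (h + τ)) + (K + M * B) * (dist p q + (h + τ)) :=
        add_le_add (mul_le_mul_of_nonneg_left (by linarith) hd.slope_constant_nonneg)
          (mul_le_mul_of_nonneg_left (by linarith) hd.time_constant_nonneg)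
    _ = _ := by ring

variable {h τ : ℕ → ℝ}

theorem exists_subseq_tendsto_approxSolution (hd : ParabolicData a b g u₀ u₀' c B M K)
    (hm : AdmissibleMeshes c M h τ) :
    ∃ (v : ℝ → ℝ → ℝ) (φ : ℕ → ℕ), StrictMono φ ∧ ∀ x t,
      Tendsto (fun n => approxSolution (h (φ n)) (τ (φ n)) a b g u₀ x t) atTop (𝓝 (v x t)) := by
  obtain ⟨A, hA⟩ := hd.exists_abs_initial_le
  have hε : Tendsto (fun n => h n + τ n) atTop (𝓝 0) := by
    simpa using hm.tendsto_mesh.add hm.tendsto_step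
  obtain ⟨v, φ, hφ, hv⟩ := exists_subseq_tendsto_of_asymptotically_lipschitz
    (f := fun n (p : ℝ × ℝ) => approxSolution (h n) (τ n) a b g u₀ p.1 p.2) hε
    (fun n p q => by
      obtain ⟨N, hN⟩ := hm.exists_period n
      exact hd.dist_approxSolution_le (hm.stable n) hN p q)
    (fun p => isBounded_iff_forall_norm_le.2 ⟨A + (K + M * B) * (|p.2| + 1), by
      rintro _ ⟨n, rfl⟩
      exact hd.abs_approxSolution_le (hm.stable n) (hm.step_le_one n) hA p.1 p.2⟩)
  exact ⟨fun x t => v (x, t), φ, hφ, fun x t => hv (x, t)⟩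

variable {v : ℝ → ℝ → ℝ}

theorem hasDerivAt_and_tendsto_approxSlope (hd : ParabolicData a b g u₀ u₀' c B M K)
    (hm : AdmissibleMeshes c M h τ)
    (hv : ∀ x t, Tendsto (fun n => approxSolution (h n) (τ n) a b g u₀ x t) atTop (𝓝 (v x t)))
    (x t : ℝ) :
    HasDerivAt (fun y => v y t) (deriv (fun y => v y t) x) x ∧
      Tendsto (fun n => approxSlope (h n) (τ n) a b g u₀ x t) atTop
        (𝓝 (deriv (fun y => v y t) x)) := by
  choose N hN using hm.exists_period
  exact hasDerivAt_and_tendsto_of_taylor (fun y => hv y t)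
    (fun n => hd.abs_approxSlope_le (hm.stable n) (hN n) x t) hm.tendsto_mesh
    fun n y => hd.abs_sub_taylor_approxSolution_le (hm.stable n) (hN n) x y t

theorem spaceTimeRegular_of_tendsto (hd : ParabolicData a b g u₀ u₀' c B M K)
    (hm : AdmissibleMeshes c M h τ)
    (hv : ∀ x t, Tendsto (fun n => approxSolution (h n) (τ n) a b g u₀ x t) atTop (𝓝 (v x t))) :
    SpaceTimeRegular (K + M * B) ((K + 2 * M * B) / c) v := by
  choose N hN using hm.exists_period
  have hslope := hd.hasDerivAt_and_tendsto_approxSlope hm hv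
  refine ⟨fun x t => ?_, fun x s t => ?_, fun t x => (hslope x t).1.differentiableAt,
    fun x t => ?_, fun x y t => ?_⟩
  · refine tendsto_nhds_unique (hv (x + 1) t) ((hv x t).congr fun n => ?_)
    exact (gridInterp_add_one (hN n) (hd.gridSolution_add_period (hN n)) x t).symm
  · have hbound := (hm.tendsto_step.const_add |t - s|).const_mul (K + M * B)
    rw [add_zero] at hbound
    exact le_of_tendsto_of_tendsto' ((hv x t).sub (hv x s)).abs hbound
      fun n => hd.abs_approxSolution_sub_le_time (hm.stable n) x s t
  · exact le_of_tendsto' (hslope x t).2.abs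
      fun n => hd.abs_approxSlope_le (hm.stable n) (hN n) x t
  · have hbound := (hm.tendsto_mesh.const_add |y - x|).const_mul ((K + 2 * M * B) / c)
    rw [add_zero] at hbound
    exact le_of_tendsto_of_tendsto' ((hslope y t).2.sub (hslope x t).2).abs hbound
      fun n => hd.abs_approxSlope_sub_le_space (hm.stable n) x y t

theorem initial_of_tendsto (hd : ParabolicData a b g u₀ u₀' c B M K)
    (hm : AdmissibleMeshes c M h τ)
    (hv : ∀ x t, Tendsto (fun n => approxSolution (h n) (τ n) a b g u₀ x t) atTop (𝓝 (v x t)))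
    (x : ℝ) : v x 0 = u₀ x := by
  refine tendsto_nhds_unique (hv x 0) ?_
  simp only [approxSolution_zero]
  refine (hd.continuous_initial.tendsto x).comp (tendsto_iff_dist_tendsto_zero.2 ?_)
  exact squeeze_zero (fun _ => dist_nonneg)
    (fun n => abs_floor_div_mul_sub_le (hm.stable n).mesh_pos x) hm.tendsto_mesh

theorem ae_tendsto_cellAverage_forcing (hd : ParabolicData a b g u₀ u₀' c B M K)
    (hm : AdmissibleMeshes c M h τ) :
    ∀ᵐ x, Tendsto (fun n => cellAverage (h n) g ⌊x / h n⌋) atTop (𝓝 (g x)) :=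
  ae_tendsto_cellAverage
    ((locallyIntegrable_const M).mono hd.measurable_forcing.aestronglyMeasurable
      (Eventually.of_forall fun x => (hd.abs_forcing_le x).trans (le_abs_self M)))
    (tendsto_nhdsWithin_iff.2
      ⟨hm.tendsto_mesh, Eventually.of_forall fun n => (hm.stable n).mesh_pos⟩)

theorem weak_of_tendsto (hd : ParabolicData a b g u₀ u₀' c B M K)
    (hm : AdmissibleMeshes c M h τ)
    (hv : ∀ x t, Tendsto (fun n => approxSolution (h n) (τ n) a b g u₀ x t) atTop (𝓝 (v x t)))
    {P : ℝ × ℝ → ℝ} {κ : NNReal} {α β : ℝ} (hP : LipTest P κ α β) :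
    ∫ p, deriv (v p.1) p.2 * P p ∂stripMeasure
      + ∫ p, a (deriv (fun x => v x p.2) p.1) * deriv (fun x => P (x, p.2)) p.1 ∂stripMeasure
      = ∫ p, g p.1 * b (deriv (fun x => v x p.2) p.1) * P p ∂stripMeasure := by
  obtain ⟨A, hA⟩ := hd.exists_abs_initial_le
  choose N hN using hm.exists_period
  have hslope (p : ℝ × ℝ) := (hd.hasDerivAt_and_tendsto_approxSlope hm hv p.1 p.2).2
  have happrox (n : ℕ) (p : ℝ × ℝ) (hp : p.2 ∈ Set.Icc α (β + 1)) :
      |approxSolution (h n) (τ n) a b g u₀ p.1 p.2| ≤ A + (K + M * B) * (β + 1 + 1) := by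
    refine (hd.abs_approxSolution_le (hm.stable n) (hm.step_le_one n) hA p.1 p.2).trans ?_
    have : |p.2| ≤ β + 1 := abs_le.2 ⟨by linarith [hP.pos, hp.1, hp.2], hp.2⟩
    gcongr
    exact hd.time_constant_nonneg
  have hparts := hP.integral_timeDeriv_mul (hd.spaceTimeRegular_of_tendsto hm hv).lipschitzWith
    fun p hp => le_of_tendsto' (hv p.1 p.2).abs fun n => happrox n p hp
  exact (congrArg (· + _) hparts).trans <| hP.integral_eq_of_tendsto
    (fun n => hd.isDiscreteSolution_approxSolution (hm.stable n) (hm.step_le_one n) (hN n))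
    hm.tendsto_mesh hm.tendsto_step happrox
    (fun n p _ => hd.abs_flux_approxSlope_le (hm.stable n) (hN n) p.1 p.2)
    (fun n p _ => hd.abs_cellAverage_mul_source_le (hm.stable n).mesh_pos _ _)
    (Eventually.of_forall fun p => hv p.1 p.2)
    (Eventually.of_forall fun p => (hd.lipschitz_flux.continuous.tendsto _).comp (hslope p))
    ((ae_stripMeasure_of_ae_space (hd.ae_tendsto_cellAverage_forcing hm)).mono fun p hp =>
      hp.mul ((hd.lipschitz_source.continuous.tendsto _).comp (hslope p)))

theorem exists_isGlobalSolution (hd : ParabolicData a b g u₀ u₀' c B M K) :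
    ∃ v, IsGlobalSolution a b g u₀ (K + M * B) ((K + 2 * M * B) / c) v := by
  obtain ⟨h, τ, hm⟩ := exists_admissibleMeshes hd.pos M
  obtain ⟨v, φ, hφ, hv⟩ := hd.exists_subseq_tendsto_approxSolution hm
  exact ⟨v, hd.spaceTimeRegular_of_tendsto (hm.comp hφ) hv, hd.initial_of_tendsto (hm.comp hφ) hv,
    fun P κ α β hP => hd.weak_of_tendsto (hm.comp hφ) hv hP⟩

end ParabolicData

end Existence

/-! ### Slope control for short times -/

section ShortTime

theorem abs_deriv_le_of_abs_le {w : ℝ → ℝ} (hw : Differentiable ℝ w) {A C δ : ℝ}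
    (hA : ∀ x, |w x| ≤ A) (hC : ∀ x y, |deriv w y - deriv w x| ≤ C * |y - x|) (hδ : 0 < δ)
    (x : ℝ) : |deriv w x| ≤ 2 * A / δ + C * δ := by
  obtain ⟨ξ, hξ, hslope⟩ := exists_deriv_eq_slope w (lt_add_of_pos_right x hδ)
    hw.continuous.continuousOn hw.differentiableOn
  have hmean : |deriv w ξ| ≤ 2 * A / δ := by
    rw [hslope, add_sub_cancel_left, abs_div, abs_of_pos hδ]
    gcongr
    linarith [abs_sub (w (x + δ)) (w x), hA (x + δ), hA x]
  have hC0 : 0 ≤ C := by simpa using (abs_nonneg _).trans (hC 0 1)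
  have hdist : C * |ξ - x| ≤ C * δ := by
    rw [abs_of_pos (sub_pos.2 hξ.1)]
    exact mul_le_mul_of_nonneg_left (by linarith [hξ.2]) hC0
  have := abs_sub_abs_le_abs_sub (deriv w x) (deriv w ξ)
  rw [abs_sub_comm] at this
  linarith [hC x ξ]

/-- Interpolation between the bound `L |t|` on `v(·, t) - v(·, 0)` and the Lipschitz constant `2 C`
of its slope, at the length scale `1 / (4 C)`. -/
theorem SpaceTimeRegular.abs_slope_sub_slope_zero_le {L C : ℝ} {v : ℝ → ℝ → ℝ}
    (hv : SpaceTimeRegular L C v) (hC : 0 < C) {t : ℝ} (ht : 16 * L * C * |t| ≤ 1) (x : ℝ) :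
    |deriv (fun y => v y t) x - deriv (fun y => v y 0) x| ≤ 1 := by
  have hderiv (y : ℝ) : deriv (fun y => v y t - v y 0) y
      = deriv (fun y => v y t) y - deriv (fun y => v y 0) y :=
    deriv_fun_sub (hv.differentiable t y) (hv.differentiable 0 y)
  have hinterp := abs_deriv_le_of_abs_le ((hv.differentiable t).sub (hv.differentiable 0))
    (A := L * |t|) (C := 2 * C) (δ := 1 / (4 * C))
    (fun y => by simpa using hv.abs_sub_time_le y 0 t) (fun y z => by
      simp only [Pi.sub_def, hderiv]
      rw [sub_sub_sub_comm]
      linarith [abs_sub (deriv (fun y => v y t) z - deriv (fun y => v y t) y)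
        (deriv (fun y => v y 0) z - deriv (fun y => v y 0) y),
        hv.abs_slope_sub_le y z t, hv.abs_slope_sub_le y z 0]) (by positivity) x
  simp only [Pi.sub_def, hderiv] at hinterp
  have hscale : 2 * (L * |t|) / (1 / (4 * C)) + 2 * C * (1 / (4 * C))
      = (16 * L * C * |t| + 1) / 2 := by
    field_simp
    ring
  linarith

end ShortTime

/-! ### Weak solutions on the unit interval -/

section WeakSolution

open Filter Topology

theorem SpaceTimeRegular.measurable_timeDeriv {L C : ℝ} {v : ℝ → ℝ → ℝ}
    (hv : SpaceTimeRegular L C v) : Measurable fun p : ℝ × ℝ => deriv (v p.1) p.2 :=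
  measurable_deriv_with_param hv.lipschitzWith.continuous

theorem measurable_deriv_space {F : ℝ × ℝ → ℝ} (hF : Continuous F) :
    Measurable fun p : ℝ × ℝ => deriv (fun x => F (x, p.2)) p.1 :=
  (measurable_deriv_with_param (f := fun t x => F (x, t)) (hF.comp continuous_swap)).comp
    measurable_swap

theorem LipTest.stripBounded_spaceDeriv {P : ℝ × ℝ → ℝ} {κ : NNReal} {α β : ℝ}
    (hP : LipTest P κ α β) :
    StripBounded (fun p => deriv (fun x => P (x, p.2)) p.1) κ α β where
  measurable := measurable_deriv_space hP.lipschitz.continuous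
  abs_le p _ := norm_deriv_le_of_lipschitz (f := fun x => P (x, p.2))
    (LipschitzWith.of_dist_le_mul fun x y => hP.abs_sub_space_le y x p.2)
  eq_zero p hp := by
    have hzero : (fun x => P (x, p.2)) = fun _ => 0 := funext fun x => hP.eq_zero (x, p.2) hp
    rw [hzero, deriv_const]

section Integrable

variable {L C : ℝ} {v : ℝ → ℝ → ℝ} {P : ℝ × ℝ → ℝ} {κ : NNReal} {α β : ℝ}

theorem SpaceTimeRegular.abs_timeDeriv_le (hv : SpaceTimeRegular L C v) (x t : ℝ) :
    |deriv (v x) t| ≤ L := by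
  have hL : 0 ≤ L := by simpa using (abs_nonneg _).trans (hv.abs_sub_time_le 0 0 1)
  simpa [hL] using norm_deriv_le_of_lipschitz (hv.lipschitzWith_time x) (x₀ := t)

theorem SpaceTimeRegular.integrable_timeDeriv_mul (hv : SpaceTimeRegular L C v)
    (hP : LipTest P κ α β) :
    Integrable (fun p => deriv (v p.1) p.2 * P p) stripMeasure :=
  (hP.stripBounded.mul hv.measurable_timeDeriv fun p _ => hv.abs_timeDeriv_le p.1 p.2).integrable

theorem SpaceTimeRegular.stripBounded_comp_slope_mul (hv : SpaceTimeRegular L C v) {f : ℝ → ℝ}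
    (hf : LipschitzWith 1 f) {Q : ℝ × ℝ → ℝ} {D : ℝ} (hQ : StripBounded Q D α β) :
    StripBounded (fun p => f (deriv (fun x => v x p.2) p.1) * Q p) ((|f 0| + C) * D) α β :=
  hQ.mul (hf.continuous.measurable.comp (measurable_deriv_space hv.lipschitzWith.continuous))
    fun p _ => abs_le_of_lipschitzWith_one hf (hv.abs_slope_le p.1 p.2)

end Integrable

theorem integral_stripMeasure_eq_intervalIntegral {F : ℝ × ℝ → ℝ} (hF : Integrable F stripMeasure)
    {T : ℝ} (hT : 0 ≤ T) (hzero : ∀ x t, t ∉ Set.Ioc 0 T → F (x, t) = 0) :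
    ∫ p, F p ∂stripMeasure = ∫ t in (0 : ℝ)..T, ∫ x in (0 : ℝ)..1, F (x, t) := by
  rw [intervalIntegral.integral_of_le hT, stripMeasure, integral_prod_symm _ hF]
  simp only [intervalIntegral.integral_of_le zero_le_one]
  refine (setIntegral_eq_integral_of_forall_compl_eq_zero fun t ht => ?_).symm
  simp only [hzero _ t ht, integral_zero]

section TestFunction

variable {T : ℝ} {φ : ℝ → ℝ → ℝ}

theorem exists_lipschitzOnWith_of_contDiff {E : Type*} [NormedAddCommGroup E] [NormedSpace ℝ E]
    {Φ : ℝ × ℝ → E} (hΦ : ContDiff ℝ 1 Φ) {α β : ℝ} (hzero : ∀ p, p.2 ∉ Set.Icc α β → Φ p = 0) :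
    ∃ κ, LipschitzOnWith κ Φ (Set.Icc 0 1 ×ˢ Set.univ) := by
  obtain ⟨D, hD⟩ := (isCompact_Icc.prod isCompact_Icc).exists_bound_of_continuousOn
    (s := Set.Icc (0 : ℝ) 1 ×ˢ Set.Icc α β) (hΦ.continuous_fderiv one_ne_zero).continuousOn
  refine ⟨D.toNNReal, ((convex_Icc 0 1).prod convex_univ).lipschitzOnWith_of_nnnorm_fderiv_le
    (fun p _ => hΦ.differentiable one_ne_zero p) fun p hp => ?_⟩
  by_cases ht : p.2 ∈ Set.Icc α β
  · exact NNReal.le_toNNReal_of_coe_le (hD p ⟨hp.1, ht⟩)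
  · have hnear : Φ =ᶠ[𝓝 p] fun _ => 0 :=
      (continuousAt_snd.eventually (isClosed_Icc.isOpen_compl.mem_nhds ht)).mono fun q hq =>
        hzero q hq
    simp [hnear.fderiv_eq]

theorem IsTest.exists_lipTest (hφ : IsTest T φ) :
    ∃ (κ : NNReal) (α β : ℝ), β < T ∧ LipTest (fun p => φ (Int.fract p.1) p.2) κ α β := by
  obtain ⟨hsmooth, ⟨α, β, hα, hβ, hzero⟩, hper⟩ := hφ
  obtain ⟨κ, hκ⟩ := exists_lipschitzOnWith_of_contDiff hsmooth fun p hp => hzero p.1 p.2 hp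
  have hspace (t : ℝ) : LipschitzOnWith κ (φ · t) (Set.Icc 0 1) := fun x hx y hy => by
    simpa [Prod.edist_eq] using hκ (x := (x, t)) ⟨hx, trivial⟩ (y := (y, t)) ⟨hy, trivial⟩
  have htime (x : ℝ) : LipschitzWith κ (φ (Int.fract x)) := fun s t => by
    simpa [Prod.edist_eq] using hκ (x := (Int.fract x, s)) ⟨fract_mem_Icc x, trivial⟩
      (y := (Int.fract x, t)) ⟨fract_mem_Icc x, trivial⟩
  exact ⟨κ + κ, α, β, hβ,
    LipschitzWith.uncurry (fun t => lipschitzWith_comp_fract (hspace t) (hper t)) htime,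
    fun x t => by simp only [Int.fract_add_one], hα, fun p hp => hzero _ _ hp⟩

end TestFunction

section GlobalSolution

variable {a b g u₀ : ℝ → ℝ} {R T L C M : ℝ} {v : ℝ → ℝ → ℝ}

theorem IsGlobalSolution.intervalIntegral_eq_zero_of_lipTest
    (hv : IsGlobalSolution a b g u₀ L C v) (ha : LipschitzWith 1 a) (hb : LipschitzWith 1 b)
    (hg : Measurable g) (hgM : ∀ x, |g x| ≤ M) (hT : 0 ≤ T) {P : ℝ × ℝ → ℝ} {κ : NNReal} {α β : ℝ}
    (hP : LipTest P κ α β) (hβ : β ≤ T) :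
    ∫ t in (0 : ℝ)..T, ∫ x in (0 : ℝ)..1,
      (deriv (v x) t * P (x, t) + a (deriv (fun y => v y t) x) * deriv (fun y => P (y, t)) x
        - g x * b (deriv (fun y => v y t) x) * P (x, t)) = 0 := by
  have htime := hv.integrable_timeDeriv_mul hP
  have hflux := (hv.stripBounded_comp_slope_mul ha hP.stripBounded_spaceDeriv).integrable
  have hsource := ((hv.stripBounded_comp_slope_mul hb hP.stripBounded).mul
    (hg.comp measurable_fst) fun p _ => hgM p.1).integrable
  simp only [Function.comp_apply, ← mul_assoc] at hsource
  have hweak := hv.weak P κ α β hP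
  have hsum : Integrable (fun p => deriv (v p.1) p.2 * P p +
      a (deriv (fun x => v x p.2) p.1) * deriv (fun x => P (x, p.2)) p.1) stripMeasure :=
    htime.add hflux
  have hdiff : Integrable (fun p => deriv (v p.1) p.2 * P p +
      a (deriv (fun x => v x p.2) p.1) * deriv (fun x => P (x, p.2)) p.1 -
      g p.1 * b (deriv (fun x => v x p.2) p.1) * P p) stripMeasure := hsum.sub hsource
  rw [← integral_add htime hflux, ← sub_eq_zero, ← integral_sub hsum hsource,
    integral_stripMeasure_eq_intervalIntegral hdiff hT] at hweak
  · exact hweak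
  · intro x t ht
    have ht' : t ∉ Set.Icc α β := fun h => ht ⟨hP.pos.trans_le h.1, h.2.trans hβ⟩
    simp only [hP.eq_zero (x, t) ht',
      hP.stripBounded_spaceDeriv.eq_zero (x, t) ht', mul_zero, add_zero, sub_zero]

theorem IsGlobalSolution.intervalIntegral_eq_zero
    (hv : IsGlobalSolution (truncatedFlux R) (truncatedSource R) (fun x => g (Int.fract x))
      u₀ L C v)
    (hg : Measurable g) (hgM : ∀ x, |g x| ≤ M) (hR : 0 ≤ R) (hT : 0 ≤ T)
    (hslope : ∀ x, ∀ t ∈ Set.Icc 0 T, |deriv (fun y => v y t) x| ≤ R)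
    {φ : ℝ → ℝ → ℝ} (hφ : IsTest T φ) :
    ∫ t in (0 : ℝ)..T, ∫ x in (0 : ℝ)..1,
      (deriv (v x) t * φ x t + arctan (deriv (fun y => v y t) x) * deriv (fun y => φ y t) x
        - g x * √(1 + deriv (fun y => v y t) x ^ 2) * φ x t) = 0 := by
  obtain ⟨κ, α, β, hβ, hP⟩ := hφ.exists_lipTest
  refine Eq.trans ?_ (hv.intervalIntegral_eq_zero_of_lipTest (lipschitzWith_truncatedFlux R)
    (uniformlyParabolic_truncated hR).lipschitz_source (hg.comp measurable_fract)
    (fun x => hgM _) hT hP hβ.le)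
  refine intervalIntegral.integral_congr fun t ht =>
    intervalIntegral.integral_congr_Ioo_of_le zero_le_one fun x hx => ?_
  rw [Set.uIcc_of_le hT] at ht
  have hfract : ∀ᶠ y in 𝓝 x, Int.fract y = y :=
    eventually_of_mem (Ioo_mem_nhds hx.1 hx.2) fun y hy => Int.fract_eq_self.2 ⟨hy.1.le, hy.2⟩
  have hderiv : deriv (fun y => φ (Int.fract y) t) x = deriv (fun y => φ y t) x :=
    EventuallyEq.deriv_eq (hfract.mono fun y hy => by simp only [hy])
  simp only [hderiv, hfract.self_of_nhds, truncatedFlux, truncatedSource,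
    clamp_of_abs_le (hslope x t ht), sub_self, mul_zero, add_zero]

theorem SpaceTimeRegular.abs_slope_deriv_le (hv : SpaceTimeRegular L C v) (x t : ℝ) :
    |deriv (deriv fun y => v y t) x| ≤ C := by
  have hC : 0 ≤ C := (abs_nonneg _).trans (hv.abs_slope_le 0 0)
  simpa [hC] using norm_deriv_le_of_lipschitz (hv.lipschitzWith_slope t) (x₀ := x)

theorem SpaceTimeRegular.slope_add_one (hv : SpaceTimeRegular L C v) (x t : ℝ) :
    deriv (fun y => v y t) (x + 1) = deriv (fun y => v y t) x := by
  rw [← deriv_comp_add_const]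
  simp only [hv.periodic]

theorem IsGlobalSolution.exists_isWeakSol
    (hv : IsGlobalSolution (truncatedFlux R) (truncatedSource R) (fun x => g (Int.fract x))
      u₀ L C v)
    (hg : Measurable g) (hgM : ∀ x, |g x| ≤ M) (hR : 0 ≤ R) (hT : 0 ≤ T)
    (hslope : ∀ x, ∀ t ∈ Set.Icc 0 T, |deriv (fun y => v y t) x| ≤ R) :
    ∃ M', IsWeakSol g T v (fun x => deriv (v x)) (fun x t => deriv (fun y => v y t) x)
      (fun x t => deriv (deriv fun y => v y t) x) L M' := by
  obtain ⟨A, hA⟩ := (isCompact_Icc.prod isCompact_Icc).exists_bound_of_continuousOn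
    (s := Set.Icc (0 : ℝ) 1 ×ˢ Set.Icc 0 T) hv.lipschitzWith.continuous.continuousOn
  refine ⟨max A C, fun x _ t _ s _ => hv.abs_sub_time_le x s t, fun x _ => ?_, ?_,
    fun φ hφ => hv.intervalIntegral_eq_zero hg hgM hR hT hslope hφ⟩
  · filter_upwards [ae_restrict_of_ae (hv.lipschitzWith_time x).ae_differentiableAt_real] with t ht
    exact ⟨ht.hasDerivAt, hv.abs_timeDeriv_le x t⟩
  · refine ae_restrict_of_forall_mem measurableSet_Icc fun t ht => ⟨fun x hx =>
      ⟨(hv.differentiable t x).hasDerivAt, (hA (x, t) ⟨hx, ht⟩).trans (le_max_left _ _),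
        (hv.abs_slope_le x t).trans (le_max_right _ _),
        (hv.abs_slope_deriv_le x t).trans (le_max_right _ _)⟩, ?_, ?_, ?_⟩
    · filter_upwards [ae_restrict_of_ae (hv.lipschitzWith_slope t).ae_differentiableAt_real]
        with x hx
      exact hx.hasDerivAt
    · have h1 (s : ℝ) : v 1 s = v 0 s := by simpa using hv.periodic 0 s
      rw [h1, h1]
    · simpa using (hv.slope_add_one 0 t).symm

end GlobalSolution

theorem parabolicData_truncated {u₀ u₀' g : ℝ → ℝ} {K : NNReal} {M : ℝ}
    (hu₀ : ∀ x ∈ Set.Icc (0 : ℝ) 1, HasDerivAt u₀ (u₀' x) x)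
    (hK : LipschitzOnWith K u₀' (Set.Icc 0 1)) (hbc : u₀ 0 = u₀ 1) (hbc' : u₀' 0 = u₀' 1)
    (hg : Measurable g) (hgM : ∀ x, |g x| ≤ M) {R : ℝ} (hR : 0 ≤ R) :
    ParabolicData (truncatedFlux R) (truncatedSource R) (fun x => g (Int.fract x))
      (fun x => u₀ (Int.fract x)) (fun x => u₀' (Int.fract x)) (1 / (1 + R ^ 2)) √(1 + R ^ 2)
      M K where
  toUniformlyParabolic := uniformlyParabolic_truncated hR
  measurable_forcing := hg.comp measurable_fract
  abs_forcing_le x := hgM _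
  periodic_forcing x := by simp only [Int.fract_add_one]
  periodic_initial x := by simp only [Int.fract_add_one]
  hasDerivAt_initial := hasDerivAt_comp_fract hu₀ hbc hbc'
  lipschitz_initial_slope := lipschitzWith_comp_fract hK hbc'

theorem abs_le_add_of_lipschitzOnWith {f : ℝ → ℝ} {K : NNReal}
    (hf : LipschitzOnWith K f (Set.Icc 0 1)) {x : ℝ} (hx : x ∈ Set.Icc (0 : ℝ) 1) :
    |f x| ≤ |f 0| + K := by
  have hdist := hf.dist_le_mul x hx 0 (by simp)
  rw [Real.dist_eq, Real.dist_eq, sub_zero, abs_of_nonneg hx.1] at hdist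
  linarith [abs_sub_abs_le_abs_sub (f x) (f 0),
    mul_le_of_le_one_right (NNReal.coe_nonneg K) hx.2]

theorem abs_slope_le_of_short_time {u₀ u₀' : ℝ → ℝ} {K : NNReal} {L C : ℝ} {v : ℝ → ℝ → ℝ}
    (hv : SpaceTimeRegular L C v) (hinit : ∀ x, v x 0 = u₀ (Int.fract x))
    (hu₀ : ∀ x ∈ Set.Icc (0 : ℝ) 1, HasDerivAt u₀ (u₀' x) x)
    (hK : LipschitzOnWith K u₀' (Set.Icc 0 1)) (hbc : u₀ 0 = u₀ 1) (hbc' : u₀' 0 = u₀' 1)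
    (hC : 0 < C) {t : ℝ} (ht : 16 * L * C * |t| ≤ 1) (x : ℝ) :
    |deriv (fun y => v y t) x| ≤ |u₀' 0| + K + 1 := by
  have hslope := hv.abs_slope_sub_slope_zero_le hC ht x
  simp only [hinit, (hasDerivAt_comp_fract hu₀ hbc hbc' x).deriv] at hslope
  linarith [abs_sub_abs_le_abs_sub (deriv (fun y => v y t) x) (u₀' (Int.fract x)),
    abs_le_add_of_lipschitzOnWith hK (fract_mem_Icc x)]

end WeakSolution

theorem statement17
    (u₀ u₀' : ℝ → ℝ) (K₀ : ℝ)
    (hu₀d : ∀ x ∈ Set.Icc (0:ℝ) 1, HasDerivAt u₀ (u₀' x) x)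
    (hu₀lip : LipschitzOnWith (Real.toNNReal K₀) u₀' (Set.Icc (0:ℝ) 1))
    (hbc : u₀ 0 = u₀ 1) (hbc' : u₀' 0 = u₀' 1)
    (M : ℝ) (hM : 0 < M) :
    ∃ T > (0:ℝ), ∀ g : ℝ → ℝ, Measurable g → (∀ x, |g x| ≤ M) →
      ∃ (u ut ux uxx : ℝ → ℝ → ℝ) (L M' : ℝ),
        IsWeakSol g T u ut ux uxx L M' ∧ ∀ x ∈ Set.Icc (0:ℝ) 1, u x 0 = u₀ x := by
  set K := K₀.toNNReal
  set R : ℝ := |u₀' 0| + K + 1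
  set B : ℝ := √(1 + R ^ 2)
  set L : ℝ := K + M * B
  set C : ℝ := (K + 2 * M * B) / (1 / (1 + R ^ 2))
  have : 0 < L := by positivity
  have hC : 0 < C := by positivity
  refine ⟨1 / (16 * L * C), by positivity, fun g hg hgM => ?_⟩
  have hdata := parabolicData_truncated hu₀d hu₀lip hbc hbc' hg hgM (R := R) (by positivity)
  obtain ⟨v, hv⟩ := hdata.exists_isGlobalSolution
  have hslope : ∀ x, ∀ t ∈ Set.Icc 0 (1 / (16 * L * C)), |deriv (fun y => v y t) x| ≤ R := by
    refine fun x t ht => abs_slope_le_of_short_time hv.toSpaceTimeRegular hv.initial hu₀d hu₀lip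
      hbc hbc' hC ?_ x
    rw [abs_of_nonneg ht.1, mul_comm]
    exact (le_div_iff₀ (by positivity)).1 ht.2
  obtain ⟨M', hsol⟩ := hv.exists_isWeakSol hg hgM (by positivity) (by positivity) hslope
  refine ⟨v, _, _, _, L, M', hsol, fun x hx => ?_⟩
  rw [hv.initial]
  simpa using comp_fract_eq_of_mem_Icc (n := 0) hbc (by simpa using hx)
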